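/- arXiv:1110.1963 — 3 statements merged into one kernel-verified Lean document; each statement's English description precedes it below -/
import Mathlib

section
/- Let d be a positive integer and let J ⊊ I be two nonzero square-free monomial ideals of S such that I is generated by square-free monomials of degree ≥ d and J is generated by square-free monomials of degree ≥ d+1. Then depth_S I ≥ d and depth_S (I/J) ≥ d. -/
open MvPolynomial

/-- The square-free monomial `∏ i ∈ T, X i` associated to a set `T` of variables. -/
noncomputable def sqMon (K : Type) [Field K] {n : ℕ} (T : Finset (Fin n)) :
    MvPolynomial (Fin n) K :=
  ∏ i ∈ T, X i

/-- `GenBySqMonOfDeg K P I` means: `I` is generated by square-free monomials whose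
degrees satisfy the predicate `P`. -/
def GenBySqMonOfDeg (K : Type) [Field K] {n : ℕ} (P : ℕ → Prop)
    (I : Ideal (MvPolynomial (Fin n) K)) : Prop :=
  ∃ G : Set (Finset (Fin n)), (∀ T ∈ G, P T.card) ∧ I = Ideal.span (sqMon K '' G)

/-- `rho K d I` : the number of square-free monomials of degree `d` belonging to `I`. -/
noncomputable def rho (K : Type) [Field K] {n : ℕ} (d : ℕ)
    (I : Ideal (MvPolynomial (Fin n) K)) : ℕ :=
  Set.ncard {T : Finset (Fin n) | T.card = d ∧ sqMon K T ∈ I}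

/-- The maximal graded ideal `(x_1, …, x_n)` of `K[x_1, …, x_n]`. -/
noncomputable def maxGraded (K : Type) [Field K] (n : ℕ) :
    Ideal (MvPolynomial (Fin n) K) :=
  Ideal.span (Set.range (X : Fin n → MvPolynomial (Fin n) K))

/-- The depth of the module `M` with respect to the ideal `I` : the supremum of the
lengths of `M`-regular sequences consisting of elements of `I`. -/
noncomputable def moduleDepth {R : Type} [CommRing R] (I : Ideal R)
    (M : Type) [AddCommGroup M] [Module R M] : ℕ∞ :=
  sSup {k : ℕ∞ | ∃ rs : List R, k = (rs.length : ℕ∞) ∧ (∀ r ∈ rs, r ∈ I) ∧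
    RingTheory.Sequence.IsRegular M rs}

/-- The `R`-module `I/J` (more precisely `I/(I ∩ J)`, which is `I/J` when `J ≤ I`). -/
noncomputable abbrev idealQuot {R : Type} [CommRing R] (I J : Ideal R) : Type :=
  ↥I ⧸ (Submodule.comap I.subtype (J : Submodule R R))

/-!
One sequence is regular on every module `I / J` in question, including `J = 0`: the complete
homogeneous symmetric polynomials `h_1, …, h_d`. Add the square-free monomials `x^T` of `I` to `J` one at a time,
larger supports first. The factor added by `x^T` is `S / (x_i : i ∉ T) = K[x_i : i ∈ T]`, on
which `h_j` acts as the complete homogeneous symmetric polynomial of the variables in `T`; as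
`d ≤ |T|`, the sequence is regular there, and regularity passes to extensions.

The claim on polynomial rings holds for any `m` consecutive `h_s, …, h_{s+m-1}` in at least `m`
variables. Splitting off a variable `x` gives `h_{i+1}(σ ∪ {x}) = h_{i+1}(σ) + x h_i(σ ∪ {x})`.
So modulo `h_s(σ ∪ {x})`, which is monic in `x`, the remaining sequence may be replaced by
`h_{s+1}(σ), …, h_{s+m-1}(σ)`, which is regular by induction, and adjoining a root of a monic
polynomial is flat.
-/

section WeaklyRegular

open RingTheory.Sequence Polynomial

lemma isWeaklyRegular_of_subsingleton {R M : Type*} [CommRing R] [AddCommGroup M] [Module R M]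
    [Subsingleton M] (rs : List R) : IsWeaklyRegular M rs := by
  induction rs generalizing M with
  | nil => exact .nil R M
  | cons r rs ih =>
    have : Subsingleton (QuotSMulTop r M) := (Submodule.mkQ_surjective _).subsingleton
    exact .cons (fun x y _ ↦ Subsingleton.elim x y) ih

lemma isWeaklyRegular_of_exact {R M₁ M₂ M₃ : Type*} [CommRing R] [AddCommGroup M₁] [Module R M₁]
    [AddCommGroup M₂] [Module R M₂] [AddCommGroup M₃] [Module R M₃] {f : M₁ →ₗ[R] M₂}
    {g : M₂ →ₗ[R] M₃} (hf : Function.Injective f) (hfg : Function.Exact f g)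
    (hg : Function.Surjective g) {rs : List R} (h₁ : IsWeaklyRegular M₁ rs)
    (h₃ : IsWeaklyRegular M₃ rs) : IsWeaklyRegular M₂ rs := by
  induction rs generalizing M₁ M₂ M₃ with
  | nil => exact .nil R M₂
  | cons r rs ih =>
    rw [isWeaklyRegular_cons_iff] at h₁ h₃ ⊢
    have hf_quot : Function.Injective (QuotSMulTop.map r f) := by
      rw [← LinearMap.exact_zero_iff_injective (QuotSMulTop r M₁), ← map_zero (QuotSMulTop.map r)]
      exact QuotSMulTop.map_first_exact_on_four_term_exact_of_isSMulRegular_last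
        ((LinearMap.exact_zero_iff_injective M₁ f).2 hf) hfg h₃.1
    exact ⟨isSMulRegular_of_range_eq_ker hf (LinearMap.exact_iff.1 hfg).symm h₁.1 h₃.1,
      ih hf_quot (QuotSMulTop.map_exact r hfg hg) (QuotSMulTop.map_surjective r hg) h₁.2 h₃.2⟩

lemma isWeaklyRegular_submoduleOf_trans {R M : Type*} [CommRing R] [AddCommGroup M] [Module R M]
    {N₁ N₂ N₃ : Submodule R M} (h₁₂ : N₁ ≤ N₂) (h₂₃ : N₂ ≤ N₃) {rs : List R}
    (h₂₁ : IsWeaklyRegular (N₂ ⧸ N₁.submoduleOf N₂) rs)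
    (h₃₂ : IsWeaklyRegular (N₃ ⧸ N₂.submoduleOf N₃) rs) :
    IsWeaklyRegular (N₃ ⧸ N₁.submoduleOf N₃) rs := by
  let ι : (N₂ ⧸ N₁.submoduleOf N₂) →ₗ[R] N₃ ⧸ N₁.submoduleOf N₃ :=
    Submodule.mapQ _ _ (Submodule.inclusion h₂₃) fun _ hx ↦ hx
  let π : (N₃ ⧸ N₁.submoduleOf N₃) →ₗ[R] N₃ ⧸ N₂.submoduleOf N₃ :=
    Submodule.factor (Submodule.comap_mono h₁₂)
  have hι : Function.Injective ι := LinearMap.ker_eq_bot.1 <|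
    Submodule.ker_liftQ_eq_bot' _ _ <| by rw [LinearMap.ker_comp, Submodule.ker_mkQ]; rfl
  have hιπ : Function.Exact ι π := by
    intro y
    obtain ⟨y, rfl⟩ := Submodule.Quotient.mk_surjective _ y
    constructor
    · intro hy
      have hyN₂ : (y : M) ∈ N₂ := (Submodule.Quotient.mk_eq_zero (N₂.submoduleOf N₃)).1 hy
      exact ⟨Submodule.Quotient.mk ⟨y, hyN₂⟩, rfl⟩
    · rintro ⟨x, hx⟩
      obtain ⟨x, rfl⟩ := Submodule.Quotient.mk_surjective _ x
      rw [← hx]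
      exact (Submodule.Quotient.mk_eq_zero _).2 x.2
  exact isWeaklyRegular_of_exact hι hιπ (Submodule.factor_surjective _) h₂₁ h₃₂

lemma isWeaklyRegular_of_ker_eq {R S M : Type*} [CommRing R] [CommRing S] [AddCommGroup M]
    [Module R M] {φ : R →+* S} (hφ : Function.Surjective φ) {f : R →ₗ[R] M}
    (hf : Function.Surjective f) (hker : ∀ p, f p = 0 ↔ φ p = 0) {rs : List R}
    (hS : IsWeaklyRegular S (rs.map φ)) : IsWeaklyRegular M rs := by
  have hker' : f.toAddMonoidHom.ker = φ.toAddMonoidHom.ker := AddSubgroup.ext hker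
  -- `S` is not given as an `R`-module, so the isomorphism is only additive.
  let e : M ≃+ S := (QuotientAddGroup.quotientKerEquivOfSurjective f.toAddMonoidHom hf).symm.trans
    ((QuotientAddGroup.quotientAddEquivOfEq hker').trans
      (QuotientAddGroup.quotientKerEquivOfSurjective φ.toAddMonoidHom hφ))
  have he (p : R) : e (f p) = φ p := by
    have : (QuotientAddGroup.quotientKerEquivOfSurjective f.toAddMonoidHom hf).symm (f p) = p :=
      (AddEquiv.symm_apply_eq _).2 rfl
    simp only [e, AddEquiv.trans_apply, this]
    rfl
  refine (AddEquiv.isWeaklyRegular_congr (e := e) <| List.forall₂_map_right_iff.2 <|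
    List.forall₂_same.2 fun r _ x ↦ ?_).2 hS
  obtain ⟨p, rfl⟩ := hf x
  rw [← map_smul, he, he, smul_eq_mul, map_mul, smul_eq_mul]

lemma isWeaklyRegular_sup_span_singleton {R S M : Type*} [CommRing R] [CommRing S]
    [AddCommGroup M] [Module R M] {φ : R →+* S} (hφ : Function.Surjective φ) {N : Submodule R M}
    {a : M} (ha : ∀ p, p • a ∈ N ↔ φ p = 0) {rs : List R} (hS : IsWeaklyRegular S (rs.map φ)) :
    IsWeaklyRegular (↥(N ⊔ R ∙ a) ⧸ N.submoduleOf (N ⊔ R ∙ a)) rs := by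
  let m : ↥(N ⊔ R ∙ a) := ⟨a, Submodule.mem_sup_right (Submodule.mem_span_singleton_self a)⟩
  let f : R →ₗ[R] ↥(N ⊔ R ∙ a) ⧸ N.submoduleOf (N ⊔ R ∙ a) :=
    Submodule.mkQ _ ∘ₗ LinearMap.toSpanSingleton R _ m
  refine isWeaklyRegular_of_ker_eq hφ (f := f) ?_ (fun p ↦ ?_) hS
  · intro y
    obtain ⟨⟨y, hy⟩, rfl⟩ := Submodule.Quotient.mk_surjective _ y
    obtain ⟨b, hb, z, hz, rfl⟩ := Submodule.mem_sup.1 hy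
    obtain ⟨p, rfl⟩ := Submodule.mem_span_singleton.1 hz
    refine ⟨p, (Submodule.Quotient.eq _).2 ?_⟩
    change p • a - (b + p • a) ∈ N
    simpa using hb
  · rw [← ha]
    exact Submodule.Quotient.mk_eq_zero _

lemma isWeaklyRegular_cons_cons_add_mul {R M : Type*} [CommRing R] [AddCommGroup M] [Module R M]
    {a b : R} {rs : List R} (h : IsWeaklyRegular M (a :: b :: rs)) (x : R) :
    IsWeaklyRegular M (a :: (b + x * a) :: rs) := by
  rw [isWeaklyRegular_cons_iff] at h ⊢
  have ha (y : QuotSMulTop a M) : a • y = 0 := by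
    obtain ⟨y, rfl⟩ := Submodule.Quotient.mk_surjective _ y
    exact (Submodule.Quotient.mk_eq_zero _).2 (Submodule.smul_mem_pointwise_smul _ _ _ trivial)
  have hact : List.Forall₂ (fun r s : R ↦ ∀ y : QuotSMulTop a M,
      AddEquiv.refl _ (r • y) = s • AddEquiv.refl _ y) (b :: rs) ((b + x * a) :: rs) :=
    .cons (fun y ↦ by simp [add_smul, mul_smul, ha]) (List.forall₂_same.2 fun _ _ _ ↦ rfl)
  exact ⟨h.1, (AddEquiv.isWeaklyRegular_congr hact).1 h.2⟩

lemma isWeaklyRegular_map_range'_of_eq_add_mul {R M : Type*} [CommRing R] [AddCommGroup M]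
    [Module R M] {b c : ℕ → R} {x : R} (hc : ∀ i, c (i + 1) = b (i + 1) + x * c i) {s m : ℕ}
    (h : IsWeaklyRegular M (c s :: (List.range' (s + 1) m).map b)) :
    IsWeaklyRegular M ((List.range' s (m + 1)).map c) := by
  induction m generalizing s M with
  | zero => exact h
  | succ m ih =>
    have hcs : IsWeaklyRegular M (c s :: c (s + 1) :: (List.range' (s + 2) m).map b) := by
      rw [hc]
      exact isWeaklyRegular_cons_cons_add_mul h x
    rw [isWeaklyRegular_cons_iff] at hcs
    exact .cons hcs.1 (ih hcs.2)

lemma isWeaklyRegular_cons_map_C {A : Type*} [CommRing A] {f : A[X]} (hf : f.Monic) {rs : List A}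
    (h : IsWeaklyRegular A rs) : IsWeaklyRegular A[X] (f :: rs.map Polynomial.C) := by
  refine .cons hf.isRegular.left ?_
  have : Module.Free A (AdjoinRoot f) := hf.free_adjoinRoot
  let e : AdjoinRoot f ≃+ QuotSMulTop f A[X] := (Submodule.quotEquivOfEq _ _ <| by
    rw [← Submodule.ideal_span_singleton_smul, smul_eq_mul, Ideal.mul_top]).toAddEquiv
  refine (AddEquiv.isWeaklyRegular_congr (e := e) ?_).1 (h.of_flat (S := AdjoinRoot f))
  refine List.forall₂_map_left_iff.2 <| List.forall₂_map_right_iff.2 <|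
    List.forall₂_same.2 fun r _ x ↦ ?_
  obtain ⟨x, rfl⟩ := AdjoinRoot.mk_surjective x
  rfl

lemma isRegular_of_isWeaklyRegular_of_forall_smul_ne_zero {R M : Type*} [CommRing R]
    [AddCommGroup M] [Module R M] [Module.Finite R M] {I : Ideal R} {rs : List R}
    (hrs : ∀ r ∈ rs, r ∈ I) (hI : ∀ r, r - 1 ∈ I → ∃ x : M, r • x ≠ 0)
    (h : IsWeaklyRegular M rs) : IsRegular M rs := by
  refine ⟨h, fun htop ↦ ?_⟩
  obtain ⟨r, hr, hr_smul⟩ := Submodule.exists_sub_one_mem_and_smul_eq_zero_of_fg_of_le_smul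
    (Ideal.ofList rs) ⊤ Module.Finite.fg_top htop.le
  obtain ⟨x, hx⟩ := hI r (Ideal.span_le.2 hrs hr)
  exact hx (hr_smul x trivial)

end WeaklyRegular

section Hsymm

open RingTheory.Sequence

variable {σ τ R : Type*} [CommSemiring R]

section
variable {f : σ → τ} (hf : Function.Injective f)
include hf

lemma killCompl_X_apply (i : σ) : killCompl hf (X (f i) : MvPolynomial τ R) = X i := by
  rw [← rename_X, killCompl_rename_app]

lemma killCompl_X_of_notMem_range {i : τ} (hi : i ∉ Set.range f) :
    killCompl hf (X i : MvPolynomial τ R) = 0 := by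
  rw [killCompl, aeval_X, dif_neg hi]

lemma killCompl_surjective :
    Function.Surjective (killCompl hf : MvPolynomial τ R →ₐ[R] MvPolynomial σ R) :=
  Function.LeftInverse.surjective (killCompl_rename_app hf)

lemma constantCoeff_killCompl (p : MvPolynomial τ R) :
    constantCoeff (killCompl hf p) = constantCoeff p := by
  induction p using MvPolynomial.induction_on with
  | C r => rw [killCompl_C, constantCoeff_C, constantCoeff_C]
  | add p q hp hq => rw [map_add, map_add, map_add, hp, hq]
  | mul_X p i _ =>
    have hi : constantCoeff (killCompl hf (X i : MvPolynomial τ R)) = 0 := by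
      by_cases hi : i ∈ Set.range f
      · obtain ⟨j, rfl⟩ := hi
        rw [killCompl_X_apply, constantCoeff_X]
      · rw [killCompl_X_of_notMem_range hf hi, map_zero]
    rw [map_mul, map_mul, map_mul, hi, constantCoeff_X, mul_zero, mul_zero]

lemma ker_killCompl {A : Type*} [CommRing A] :
    RingHom.ker (killCompl hf : MvPolynomial τ A →ₐ[A] MvPolynomial σ A) =
      Ideal.span (X '' (Set.range f)ᶜ) := by
  set Q : Ideal (MvPolynomial τ A) := Ideal.span (X '' (Set.range f)ᶜ)
  apply le_antisymm
  · have hmk : ((Ideal.Quotient.mkₐ A Q).comp (rename f)).comp (killCompl hf) =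
        Ideal.Quotient.mkₐ A Q := by
      ext i : 1
      by_cases hi : i ∈ Set.range f
      · obtain ⟨j, rfl⟩ := hi
        simp only [AlgHom.comp_apply, killCompl_X_apply, rename_X]
      · simp only [AlgHom.comp_apply, killCompl_X_of_notMem_range hf hi, map_zero]
        have hXi : X i ∈ Q := Ideal.subset_span (Set.mem_image_of_mem X hi)
        exact (Ideal.Quotient.eq_zero_iff_mem.2 hXi).symm
    intro p hp
    rw [RingHom.mem_ker] at hp
    have hmk_p := AlgHom.congr_fun hmk p
    simp only [AlgHom.comp_apply, hp, map_zero] at hmk_p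
    exact Ideal.Quotient.eq_zero_iff_mem.1 hmk_p.symm
  · rw [Ideal.span_le]
    rintro _ ⟨i, hi, rfl⟩
    exact killCompl_X_of_notMem_range hf hi

variable [Fintype σ] [Fintype τ] [DecidableEq σ] [DecidableEq τ]

lemma killCompl_hsymm (n : ℕ) : killCompl hf (hsymm τ R n) = hsymm σ R n := by
  simp only [hsymm, map_sum, map_multiset_prod, Multiset.map_map]
  symm
  refine Finset.sum_of_injOn (Sym.map f) (Sym.map_injective hf n).injOn (by simp) ?_ ?_
  · intro s _ hs
    obtain ⟨i, his, hi⟩ : ∃ i ∈ s, i ∉ Set.range f := by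
      by_contra! hrange
      choose g hg using hrange
      refine hs ⟨s.attach.map fun i ↦ g i.1 i.2, by simp, ?_⟩
      simp only [Sym.map_map, Function.comp_def, hg, Sym.attach_map_coe]
    exact Multiset.prod_eq_zero (Multiset.mem_map.2 ⟨i, his, killCompl_X_of_notMem_range hf hi⟩)
  · intro s _
    simp [killCompl_X_apply, Function.comp_def]

end

lemma optionEquivLeft_rename_some (p : MvPolynomial σ R) :
    optionEquivLeft R σ (rename some p) = Polynomial.C p := by
  have h : (optionEquivLeft R σ).toAlgHom.comp (rename some) = Polynomial.CAlgHom := by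
    ext i : 1
    simp
  exact AlgHom.congr_fun h p

/-- The sequence `h_s, h_{s+1}, …, h_{s+m-1}` of complete homogeneous symmetric polynomials. -/
noncomputable def hsymmSeq (σ R : Type*) [CommSemiring R] [Fintype σ] [DecidableEq σ] (s m : ℕ) :
    List (MvPolynomial σ R) :=
  (List.range' s m).map (hsymm σ R)

variable [Fintype σ] [DecidableEq σ]

lemma hsymm_succ_mem_idealOfVars (n : ℕ) : hsymm σ R (n + 1) ∈ idealOfVars σ R := by
  refine sum_mem fun s _ ↦ ?_
  obtain ⟨i, t, rfl⟩ := s.exists_eq_cons_of_succ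
  rw [Sym.val_eq_coe, Sym.coe_cons, Multiset.map_cons, Multiset.prod_cons]
  exact Ideal.mul_mem_right _ _ (Ideal.subset_span ⟨i, rfl⟩)

lemma hsymm_option_succ (n : ℕ) : hsymm (Option σ) R (n + 1) =
    rename some (hsymm σ R (n + 1)) + X none * hsymm (Option σ) R n := by
  simp only [hsymm, map_sum, Finset.mul_sum]
  rw [← (symOptionSuccEquiv (α := σ) (n := n)).symm.sum_comp, Fintype.sum_sum_type, add_comm]
  congr 1
  · refine Finset.sum_congr rfl fun s _ ↦ ?_
    simp [symOptionSuccEquiv, SymOptionSuccEquiv.decode, map_multiset_prod]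
  · refine Finset.sum_congr rfl fun s _ ↦ ?_
    simp only [symOptionSuccEquiv, SymOptionSuccEquiv.decode, Equiv.coe_fn_symm_mk,
      Sym.val_eq_coe, Sym.coe_cons, Multiset.map_cons, Multiset.prod_cons]

lemma optionEquivLeft_hsymm_succ (n : ℕ) :
    optionEquivLeft R σ (hsymm (Option σ) R (n + 1)) =
      Polynomial.C (hsymm σ R (n + 1)) +
        Polynomial.X * optionEquivLeft R σ (hsymm (Option σ) R n) := by
  rw [hsymm_option_succ, map_add, map_mul, optionEquivLeft_rename_some, optionEquivLeft_X_none]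

lemma monic_optionEquivLeft_hsymm (n : ℕ) :
    (optionEquivLeft R σ (hsymm (Option σ) R n)).Monic := by
  nontriviality R
  induction n with
  | zero =>
    rw [hsymm_zero, map_one]
    exact Polynomial.monic_one
  | succ n ih =>
    rw [optionEquivLeft_hsymm_succ]
    refine (Polynomial.monic_X.mul ih).add_of_right (Polynomial.degree_C_le.trans_lt ?_)
    rw [← Polynomial.natDegree_pos_iff_degree_pos, Polynomial.natDegree_X_mul ih.ne_zero]
    exact Nat.succ_pos _

variable {A : Type*} [CommRing A]

lemma isWeaklyRegular_hsymmSeq_of_equiv [Fintype τ] [DecidableEq τ] (e : σ ≃ τ) {s m : ℕ}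
    (h : IsWeaklyRegular (MvPolynomial σ A) (hsymmSeq σ A s m)) :
    IsWeaklyRegular (MvPolynomial τ A) (hsymmSeq τ A s m) := by
  refine (AddEquiv.isWeaklyRegular_congr (e := (renameEquiv A e).toAddEquiv) ?_).1 h
  refine List.forall₂_map_left_iff.2 <| List.forall₂_map_right_iff.2 <|
    List.forall₂_same.2 fun i _ x ↦ ?_
  rw [← rename_hsymm σ A i e]
  exact map_mul (renameEquiv A e) _ x

lemma isWeaklyRegular_hsymmSeq_option {s m : ℕ}
    (h : IsWeaklyRegular (MvPolynomial σ A) (hsymmSeq σ A (s + 1) m)) :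
    IsWeaklyRegular (MvPolynomial (Option σ) A)
      (hsymmSeq (Option σ) A s (m + 1)) := by
  have hmonic := isWeaklyRegular_cons_map_C (monic_optionEquivLeft_hsymm s) h
  rw [hsymmSeq, List.map_map] at hmonic
  have hpoly := isWeaklyRegular_map_range'_of_eq_add_mul
    (b := Polynomial.C ∘ hsymm σ A) (c := fun i ↦ optionEquivLeft A σ (hsymm (Option σ) A i))
    optionEquivLeft_hsymm_succ hmonic
  refine (AddEquiv.isWeaklyRegular_congr (e := (optionEquivLeft A σ).toAddEquiv) ?_).2 hpoly
  exact List.forall₂_map_left_iff.2 <| List.forall₂_map_right_iff.2 <|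
    List.forall₂_same.2 fun i _ x ↦ map_mul (optionEquivLeft A σ) _ x

lemma isWeaklyRegular_hsymmSeq (s : ℕ) {m : ℕ} (hm : m ≤ Fintype.card σ) :
    IsWeaklyRegular (MvPolynomial σ A) (hsymmSeq σ A s m) := by
  refine Fintype.induction_empty_option (P := fun σ _ ↦ ∀ [DecidableEq σ] s m, m ≤ Fintype.card σ →
    IsWeaklyRegular (MvPolynomial σ A) (hsymmSeq σ A s m))
    (fun σ τ _ e ih _ s m hm ↦ ?_) (fun s m hm ↦ ?_) (fun σ _ ih _ s m hm ↦ ?_) σ s m hm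
  · classical
    let _ := Fintype.ofEquiv τ e.symm
    exact isWeaklyRegular_hsymmSeq_of_equiv e (ih s m (hm.trans_eq (Fintype.card_congr e.symm)))
  · obtain rfl : m = 0 := by simpa using hm
    exact .nil _ _
  · classical
    cases m with
    | zero => exact .nil _ _
    | succ m =>
      rw [Fintype.card_option, Nat.add_le_add_iff_right] at hm
      convert isWeaklyRegular_hsymmSeq_option (ih (s + 1) m hm)

end Hsymm

section SquareFreeMonomial

open RingTheory.Sequence

variable {K : Type} [Field K] {n : ℕ}

/-- The quotient map `S → S / (x_i : i ∉ T) = K[x_i : i ∈ T]`, setting the variables outside `T`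
to zero. -/
noncomputable def restrictVars (K : Type) [Field K] {n : ℕ} (T : Finset (Fin n)) :
    MvPolynomial (Fin n) K →ₐ[K] MvPolynomial T K :=
  killCompl Subtype.val_injective

lemma restrictVars_sqMon_self_ne_zero (T : Finset (Fin n)) : restrictVars K T (sqMon K T) ≠ 0 := by
  rw [sqMon, map_prod, Finset.prod_ne_zero_iff]
  intro i hi
  rw [restrictVars, killCompl_X_apply Subtype.val_injective ⟨i, hi⟩]
  exact X_ne_zero _

lemma restrictVars_sqMon_of_not_subset {T V : Finset (Fin n)} (hVT : ¬V ⊆ T) :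
    restrictVars K T (sqMon K V) = 0 := by
  obtain ⟨i, hiV, hiT⟩ := Finset.not_subset.1 hVT
  rw [sqMon, map_prod]
  exact Finset.prod_eq_zero hiV (killCompl_X_of_notMem_range _ (by simpa using hiT))

lemma restrictVars_eq_zero_of_mem_span {G : Set (Finset (Fin n))} {T : Finset (Fin n)}
    (hG : ∀ V ∈ G, ¬V ⊆ T) {p : MvPolynomial (Fin n) K} (hp : p ∈ Ideal.span (sqMon K '' G)) :
    restrictVars K T p = 0 := by
  have hle : Ideal.span (sqMon K '' G) ≤ RingHom.ker (restrictVars K T) :=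
    Ideal.span_le.2 <| Set.forall_mem_image.2 fun V hV ↦ restrictVars_sqMon_of_not_subset (hG V hV)
  exact hle hp

lemma sqMon_mem_span_iff {G : Set (Finset (Fin n))} {T : Finset (Fin n)} :
    sqMon K T ∈ Ideal.span (sqMon K '' G) ↔ ∃ V ∈ G, V ⊆ T := by
  refine ⟨fun hT ↦ ?_, fun ⟨V, hV, hVT⟩ ↦ ?_⟩
  · by_contra! hG
    exact restrictVars_sqMon_self_ne_zero T (restrictVars_eq_zero_of_mem_span hG hT)
  · exact Ideal.mem_of_dvd _ (Finset.prod_dvd_prod_of_subset V T X hVT)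
      (Ideal.subset_span (Set.mem_image_of_mem _ hV))

lemma X_mul_sqMon_of_notMem {T : Finset (Fin n)} {i : Fin n} (hi : i ∉ T) :
    X i * sqMon K T = sqMon K (insert i T) :=
  (Finset.prod_insert hi).symm

lemma smul_sqMon_mem_span_iff {G : Set (Finset (Fin n))} {T : Finset (Fin n)}
    (hG : ∀ V ∈ G, ¬V ⊆ T) (hT : ∀ i ∉ T, insert i T ∈ G) (p : MvPolynomial (Fin n) K) :
    p • sqMon K T ∈ Ideal.span (sqMon K '' G) ↔ restrictVars K T p = 0 := by
  refine ⟨fun hp ↦ ?_, fun hp ↦ ?_⟩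
  · have hmul := restrictVars_eq_zero_of_mem_span hG hp
    rw [smul_eq_mul, map_mul] at hmul
    exact (mul_eq_zero.1 hmul).resolve_right (restrictVars_sqMon_self_ne_zero T)
  · have hle : Ideal.span (X '' (Set.range ((↑) : T → Fin n))ᶜ) ≤
        (Ideal.span (sqMon K '' G)).colon {sqMon K T} := by
      refine Ideal.span_le.2 <| Set.forall_mem_image.2 fun i hi ↦ ?_
      have hiT : i ∉ T := by simpa using hi
      rw [SetLike.mem_coe, Submodule.mem_colon_singleton, smul_eq_mul, X_mul_sqMon_of_notMem hiT]
      exact Ideal.subset_span (Set.mem_image_of_mem _ (hT i hiT))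
    rw [← ker_killCompl Subtype.val_injective] at hle
    exact Submodule.mem_colon_singleton.1 (hle hp)

lemma isWeaklyRegular_idealQuot_span_insert {G : Set (Finset (Fin n))} {T : Finset (Fin n)}
    (hG : ∀ V ∈ G, ¬V ⊆ T) (hT : ∀ i ∉ T, insert i T ∈ G) (s : ℕ) {m : ℕ} (hm : m ≤ T.card) :
    IsWeaklyRegular
      (idealQuot (Ideal.span (sqMon K '' insert T G)) (Ideal.span (sqMon K '' G)))
      (hsymmSeq (Fin n) K s m) := by
  rw [Set.image_insert_eq, Ideal.span_insert, sup_comm]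
  refine isWeaklyRegular_sup_span_singleton (φ := (restrictVars K T).toRingHom)
    (killCompl_surjective _) (smul_sqMon_mem_span_iff hG hT) ?_
  have hmap : (hsymmSeq (Fin n) K s m).map (restrictVars K T) = hsymmSeq T K s m := by
    rw [hsymmSeq, List.map_map]
    exact List.map_congr_left fun i _ ↦ killCompl_hsymm _ i
  exact hmap ▸ isWeaklyRegular_hsymmSeq s (by simpa using hm)

lemma isWeaklyRegular_idealQuot_span {V U : Set (Finset (Fin n))} (hV : IsUpperSet V)
    (hU : IsUpperSet U) (hVU : V ⊆ U) (s : ℕ) {m : ℕ} (hm : ∀ T ∈ U \ V, m ≤ T.card) :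
    IsWeaklyRegular
      (idealQuot (Ideal.span (sqMon K '' U)) (Ideal.span (sqMon K '' V)))
      (hsymmSeq (Fin n) K s m) := by
  refine (U.toFinite.induction_to (C := fun W ↦ V ⊆ W ∧ IsUpperSet W ∧
    IsWeaklyRegular (idealQuot (Ideal.span (sqMon K '' W)) (Ideal.span (sqMon K '' V)))
      (hsymmSeq (Fin n) K s m)) V hVU ⟨subset_rfl, hV, ?_⟩ fun W hWU ⟨hVW, hW, hreg⟩ ↦ ?_).2.2
  · have : Subsingleton (idealQuot (Ideal.span (sqMon K '' V)) (Ideal.span (sqMon K '' V))) :=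
      Submodule.Quotient.subsingleton_iff.2 (Submodule.submoduleOf_self _)
    exact isWeaklyRegular_of_subsingleton _
  · obtain ⟨T, ⟨hTU, hTW⟩, hTmax⟩ :=
      (U \ W).toFinite.exists_maximal (Set.nonempty_of_ssubset hWU)
    have hinsert (i : Fin n) (hi : i ∉ T) : insert i T ∈ W := by
      by_contra hiW
      exact hi (hTmax ⟨hU (Finset.subset_insert i T) hTU, hiW⟩ (Finset.subset_insert i T)
        (Finset.mem_insert_self i T))
    have hTreg := isWeaklyRegular_idealQuot_span_insert (K := K)
      (fun V' hV' hV'T ↦ hTW (hW hV'T hV')) hinsert s (hm T ⟨hTU, fun hTV ↦ hTW (hVW hTV)⟩)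
    have hTupper : IsUpperSet (insert T W) := by
      rintro A B hAB (rfl | hA)
      · by_cases hB : B ∈ W
        · exact .inr hB
        · exact .inl ((hTmax ⟨hU hAB hTU, hB⟩ hAB).antisymm hAB)
      · exact .inr (hW hAB hA)
    exact ⟨T, ⟨hTU, hTW⟩, hVW.trans (Set.subset_insert T W), hTupper,
      isWeaklyRegular_submoduleOf_trans (Ideal.span_mono (Set.image_mono hVW))
        (Ideal.span_mono (Set.image_mono (Set.subset_insert T W))) hreg hTreg⟩

/-- The supports of the square-free monomials lying in `I`. -/
def sqSupports (I : Ideal (MvPolynomial (Fin n) K)) : Set (Finset (Fin n)) :=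
  {T | sqMon K T ∈ I}

lemma isUpperSet_sqSupports (I : Ideal (MvPolynomial (Fin n) K)) : IsUpperSet (sqSupports I) :=
  fun T T' hTT' hT ↦ Ideal.mem_of_dvd I (Finset.prod_dvd_prod_of_subset T T' X hTT') hT

lemma GenBySqMonOfDeg.span_sqSupports {P : ℕ → Prop} {I : Ideal (MvPolynomial (Fin n) K)}
    (hI : GenBySqMonOfDeg K P I) : Ideal.span (sqMon K '' sqSupports I) = I := by
  obtain ⟨G, -, rfl⟩ := hI
  refine le_antisymm (Ideal.span_le.2 (Set.image_subset_iff.2 fun T hT ↦ hT)) ?_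
  exact Ideal.span_mono (Set.image_mono fun T hT ↦ Ideal.subset_span (Set.mem_image_of_mem _ hT))

lemma GenBySqMonOfDeg.le_card_of_mem_sqSupports {d : ℕ} {I : Ideal (MvPolynomial (Fin n) K)}
    (hI : GenBySqMonOfDeg K (fun k ↦ d ≤ k) I) {T : Finset (Fin n)} (hT : T ∈ sqSupports I) :
    d ≤ T.card := by
  obtain ⟨G, hG, rfl⟩ := hI
  obtain ⟨V, hV, hVT⟩ := sqMon_mem_span_iff.1 hT
  exact (hG V hV).trans (Finset.card_le_card hVT)

lemma mem_maxGraded_of_mem_hsymmSeq {s m : ℕ} {h : MvPolynomial (Fin n) K}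
    (hh : h ∈ hsymmSeq (Fin n) K (s + 1) m) : h ∈ maxGraded K n := by
  obtain ⟨i, hi, rfl⟩ := List.mem_map.1 hh
  obtain ⟨hsi, -⟩ := List.mem_range'_1.1 hi
  obtain ⟨j, rfl⟩ := Nat.exists_eq_add_of_le' hsi
  exact hsymm_succ_mem_idealOfVars _

lemma restrictVars_ne_zero_of_sub_one_mem_maxGraded {r : MvPolynomial (Fin n) K}
    (hr : r - 1 ∈ maxGraded K n) (T : Finset (Fin n)) : restrictVars K T r ≠ 0 := by
  have hle : maxGraded K n ≤ RingHom.ker constantCoeff :=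
    Ideal.span_le.2 <| Set.forall_mem_range.2 fun i ↦ constantCoeff_X (R := K) i
  have hcoeff : constantCoeff r = 1 := by
    simpa [sub_eq_zero] using hle hr
  intro h
  rw [← constantCoeff_killCompl (Subtype.val_injective (p := (· ∈ T))) r] at hcoeff
  rw [restrictVars] at h
  rw [h, map_zero] at hcoeff
  exact zero_ne_one hcoeff

lemma isRegular_hsymmSeq_idealQuot {d : ℕ} {P : ℕ → Prop} {I J : Ideal (MvPolynomial (Fin n) K)}
    (hJI : J < I) (hI : GenBySqMonOfDeg K (fun k ↦ d ≤ k) I) (hJ : GenBySqMonOfDeg K P J) :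
    IsRegular (idealQuot I J) (hsymmSeq (Fin n) K 1 d) := by
  have hweak := isWeaklyRegular_idealQuot_span (K := K) (isUpperSet_sqSupports J)
    (isUpperSet_sqSupports I) (fun T hT ↦ hJI.le hT) 1
    fun T hT ↦ hI.le_card_of_mem_sqSupports hT.1
  rw [hI.span_sqSupports, hJ.span_sqSupports] at hweak
  refine isRegular_of_isWeaklyRegular_of_forall_smul_ne_zero (I := maxGraded K n)
    (fun h ↦ mem_maxGraded_of_mem_hsymmSeq) (fun r hr ↦ ?_) hweak
  obtain ⟨T, hTI, hTJ⟩ : ∃ T ∈ sqSupports I, T ∉ sqSupports J := by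
    by_contra! hIJ
    refine hJI.not_ge ?_
    rw [← hI.span_sqSupports]
    exact Ideal.span_le.2 (Set.image_subset_iff.2 hIJ)
  refine ⟨Submodule.Quotient.mk ⟨sqMon K T, hTI⟩, fun hzero ↦ ?_⟩
  have hrT : r * sqMon K T ∈ Ideal.span (sqMon K '' sqSupports J) := by
    rw [hJ.span_sqSupports]
    exact (Submodule.Quotient.mk_eq_zero (J.submoduleOf I)).1 hzero
  have hrestrict := restrictVars_eq_zero_of_mem_span
    (fun V hV hVT ↦ hTJ (isUpperSet_sqSupports J hVT hV)) hrT
  rw [map_mul] at hrestrict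
  exact mul_ne_zero (restrictVars_ne_zero_of_sub_one_mem_maxGraded hr T)
    (restrictVars_sqMon_self_ne_zero T) hrestrict

lemma genBySqMonOfDeg_bot (P : ℕ → Prop) :
    GenBySqMonOfDeg K P (⊥ : Ideal (MvPolynomial (Fin n) K)) :=
  ⟨∅, fun _ hT ↦ hT.elim, by rw [Set.image_empty, Ideal.span_empty]⟩

lemma isRegular_hsymmSeq_ideal {d : ℕ} {I : Ideal (MvPolynomial (Fin n) K)} (hI0 : I ≠ ⊥)
    (hI : GenBySqMonOfDeg K (fun k ↦ d ≤ k) I) :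
    IsRegular I (hsymmSeq (Fin n) K 1 d) := by
  have hbot : (⊥ : Ideal (MvPolynomial (Fin n) K)).submoduleOf I = ⊥ :=
    LinearMap.ker_eq_bot.2 I.injective_subtype
  exact ((Submodule.quotEquivOfEqBot _ hbot).isRegular_congr _).1
    (isRegular_hsymmSeq_idealQuot hI0.bot_lt hI (genBySqMonOfDeg_bot fun _ ↦ True))

lemma le_moduleDepth_of_isRegular_hsymmSeq {d : ℕ} {M : Type} [AddCommGroup M]
    [Module (MvPolynomial (Fin n) K) M]
    (h : IsRegular M (hsymmSeq (Fin n) K 1 d)) :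
    (d : ℕ∞) ≤ moduleDepth (maxGraded K n) M :=
  le_sSup ⟨_, by rw [hsymmSeq, List.length_map, List.length_range'],
    fun _ ↦ mem_maxGraded_of_mem_hsymmSeq, h⟩

end SquareFreeMonomial

theorem stmt_0_general {n : ℕ} {K : Type} [Field K] {d : ℕ} {P : ℕ → Prop}
    {I J : Ideal (MvPolynomial (Fin n) K)} (hJI : J < I)
    (hI : GenBySqMonOfDeg K (fun k => d ≤ k) I) (hJ : GenBySqMonOfDeg K P J) :
    (d : ℕ∞) ≤ moduleDepth (maxGraded K n) ↥I ∧
      (d : ℕ∞) ≤ moduleDepth (maxGraded K n) (idealQuot I J) :=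
  ⟨le_moduleDepth_of_isRegular_hsymmSeq (isRegular_hsymmSeq_ideal hJI.ne_bot hI),
    le_moduleDepth_of_isRegular_hsymmSeq (isRegular_hsymmSeq_idealQuot hJI hI hJ)⟩

/-- Lemma 1.1. -/
theorem stmt_0 (n : ℕ) (K : Type) [Field K] (d : ℕ) (hd : 0 < d)
    (I J : Ideal (MvPolynomial (Fin n) K)) (hJ0 : J ≠ ⊥) (hJI : J < I)
    (hI : GenBySqMonOfDeg K (fun k => d ≤ k) I)
    (hJ : GenBySqMonOfDeg K (fun k => d + 1 ≤ k) J) :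
    (d : ℕ∞) ≤ moduleDepth (maxGraded K n) ↥I ∧
      (d : ℕ∞) ≤ moduleDepth (maxGraded K n) (idealQuot I J) :=
  stmt_0_general hJI hI hJ
end

section
/- Let d be a positive integer, I a nonzero square-free monomial ideal generated by square-free monomials of degree ≥ d, and J ⊊ I a nonzero square-free monomial ideal with J = E + F, where F ⊄ E, E is an ideal generated by square-free monomials of degree d+1 and F is an ideal generated by square-free monomials of degree > d+1. Then depth_S (I/J) = d if and only if depth_S (I/E) = d. -/
open MvPolynomial

/-!
By Rees's theorem a finite module `M` with `𝔪M ≠ M` over a noetherian ring `S` has `𝔪`-depth at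
least `k` iff `Ext^i(S/𝔪, M) = 0` for all `i < k`. For `S = K[x₁, …, xₙ]`, the quotient `J/E` is
filtered by the modules `S/P_T`, where `T` runs over the square-free monomials in `J ∖ E` and `P_T`
is generated by the variables outside `T`; the variables in `T` are a regular sequence on `S/P_T`,
and `|T| ≥ d + 2`. Hence `Ext^i(S/𝔪, J/E) = 0` for `i ≤ d + 1`, and the long exact sequence of
`0 → J/E → I/E → I/J → 0` shows that, for `k ≤ d + 1`, the modules `Ext^i(S/𝔪, I/E)` vanish for all
`i < k` iff the modules `Ext^i(S/𝔪, I/J)` do.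
-/

section ExtVanishing

open CategoryTheory Abelian

universe w v u

/-- `Ext^i(X, Y) = 0` for every `i < k`. For `X = R ⧸ 𝔪` and `Y` a finite module with `𝔪Y ≠ Y` over
a noetherian ring `R`, this says that the `𝔪`-depth of `Y` is at least `k`. -/
def ExtVanishesBelow {C : Type u} [Category.{v} C] [Abelian C] [HasExt.{w} C] (X Y : C) (k : ℕ) :
    Prop :=
  ∀ i < k, Subsingleton (Ext X Y i)

namespace ExtVanishesBelow

section Abelian

variable {C : Type u} [Category.{v} C] [Abelian C] [HasExt.{w} C] {X Y Z : C} {k l : ℕ}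

theorem mono (h : ExtVanishesBelow X Y l) (hkl : k ≤ l) : ExtVanishesBelow X Y k :=
  fun i hi => h i (hi.trans_le hkl)

theorem of_iso (e : Y ≅ Z) (h : ExtVanishesBelow X Y k) : ExtVanishesBelow X Z k := fun i hi =>
  have : Subsingleton ((extFunctorObj X i).obj Y) := h i hi
  ((extFunctorObj X i).mapIso e).addCommGroupIsoToAddEquiv.symm.toEquiv.subsingleton

theorem of_isZero (hY : Limits.IsZero Y) : ExtVanishesBelow X Y k := fun i _ =>
  AddCommGrpCat.subsingleton_of_isZero ((extFunctorObj X i).map_isZero hY)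

theorem middle_of_shortExact {S : ShortComplex C} (hS : S.ShortExact)
    (h₁ : ExtVanishesBelow X S.X₁ k) (h₃ : ExtVanishesBelow X S.X₃ k) :
    ExtVanishesBelow X S.X₂ k := fun i hi =>
  have zero₁ := AddCommGrpCat.isZero_of_iff_subsingleton.mpr (h₁ i hi)
  have zero₃ := AddCommGrpCat.isZero_of_iff_subsingleton.mpr (h₃ i hi)
  AddCommGrpCat.subsingleton_of_isZero <| ShortComplex.Exact.isZero_of_both_zeros
    (Ext.covariant_sequence_exact₂' X hS i) (zero₁.eq_zero_of_src _) (zero₃.eq_zero_of_tgt _)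

theorem right_of_shortExact {S : ShortComplex C} (hS : S.ShortExact)
    (h₁ : ExtVanishesBelow X S.X₁ (k + 1)) (h₂ : ExtVanishesBelow X S.X₂ k) :
    ExtVanishesBelow X S.X₃ k := fun i hi =>
  have zero₂ := AddCommGrpCat.isZero_of_iff_subsingleton.mpr (h₂ i hi)
  have zero₁ := AddCommGrpCat.isZero_of_iff_subsingleton.mpr (h₁ (i + 1) (by lia))
  AddCommGrpCat.subsingleton_of_isZero <| ShortComplex.Exact.isZero_of_both_zeros
    (Ext.covariant_sequence_exact₃' X hS i (i + 1) rfl)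
    (zero₂.eq_zero_of_src _) (zero₁.eq_zero_of_tgt _)

end Abelian

variable {R : Type u} [CommRing R] [Small.{v} R] {M N : ModuleCat.{v} R} {k : ℕ}

theorem succ_of_quotSMulTop {r : R} (hr : r ∈ Module.annihilator R N) (hM : IsSMulRegular M r)
    (h : ExtVanishesBelow N (ModuleCat.of R (QuotSMulTop r M)) k) :
    ExtVanishesBelow N M (k + 1) := by
  intro i hi
  -- Multiplication by `r` on `Ext^i(N, M)` is zero as `r` kills `N`; it is injective by the long
  -- exact sequence.
  have smul_eq_zero := Ext.postcomp_smul_id_eq_zero_of_mem_annihilator (M := M) hr i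
  have hS := hM.smulShortComplex_shortExact
  suffices Mono (AddCommGrpCat.ofHom ((Ext.mk₀ (r • 𝟙 M)).postcomp N (add_zero i))) from
    AddCommGrpCat.subsingleton_of_isZero (Limits.IsZero.of_mono_eq_zero _ smul_eq_zero)
  cases i with
  | zero =>
    have : Mono (r • 𝟙 M) := hS.mono_f
    exact Ext.mono_postcomp_mk₀_of_mono N _
  | succ i =>
    have zero₃ := AddCommGrpCat.isZero_of_iff_subsingleton.mpr (h i (by lia))
    exact (Ext.covariant_sequence_exact₁' N hS i (i + 1) rfl).mono_g (zero₃.eq_zero_of_src _)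

end ExtVanishesBelow

end ExtVanishing

section Depth

open CategoryTheory

variable {R : Type} [CommRing R] [IsNoetherianRing R] {𝔪 : Ideal R}
  {M : Type} [AddCommGroup M] [Module R M] [Module.Finite R M]

theorem le_moduleDepth_iff (hM : 𝔪 • (⊤ : Submodule R M) < ⊤) {k : ℕ} :
    (k : ℕ∞) ≤ moduleDepth 𝔪 M ↔
      ExtVanishesBelow (ModuleCat.of R (R ⧸ 𝔪)) (ModuleCat.of R M) k := by
  have support_eq : Module.support R (R ⧸ 𝔪) = PrimeSpectrum.zeroLocus 𝔪 := by
    rw [Module.support_eq_zeroLocus, Ideal.annihilator_quotient]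
  constructor
  · cases k with
    | zero => exact fun _ i hi => absurd hi i.not_lt_zero
    | succ k =>
      intro hk
      rw [Nat.cast_succ, ENat.natCast_add_one_le_iff, moduleDepth, lt_sSup_iff] at hk
      obtain ⟨_, ⟨rs, rfl, hrs, hreg⟩, hlt⟩ := hk
      exact ExtVanishesBelow.mono (ModuleCat.subsingleton_ext_of_exists_isRegular 𝔪 _
        support_eq.subset _ hM rs hrs hreg) (Nat.cast_lt.mp hlt)
  · intro h
    obtain ⟨rs, rfl, hrs, hreg⟩ :=
      ModuleCat.exists_isRegular_of_exists_subsingleton_ext 𝔪 k _ hM _ support_eq h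
    exact le_sSup ⟨rs, rfl, hrs, hreg⟩

theorem moduleDepth_eq_iff (hM : 𝔪 • (⊤ : Submodule R M) < ⊤) {k : ℕ} :
    moduleDepth 𝔪 M = k ↔
      ExtVanishesBelow (ModuleCat.of R (R ⧸ 𝔪)) (ModuleCat.of R M) k ∧
        ¬ ExtVanishesBelow (ModuleCat.of R (R ⧸ 𝔪)) (ModuleCat.of R M) (k + 1) := by
  rw [← le_moduleDepth_iff hM, ← le_moduleDepth_iff hM, Nat.cast_succ,
    ENat.natCast_add_one_le_iff, not_lt, le_antisymm_iff, and_comm]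

end Depth

open Pointwise in
/-- Killing `r` in `R ⧸ I` yields `R ⧸ (I + (r))`. -/
noncomputable def quotSMulTopQuotientEquiv {R : Type*} [CommRing R] (I : Ideal R) (r : R) :
    QuotSMulTop r (R ⧸ I) ≃ₗ[R] R ⧸ (I ⊔ Ideal.span {r}) :=
  have smul_top : r • (⊤ : Submodule R (R ⧸ I)) = Submodule.map I.mkQ (Ideal.span {r}) := by
    rw [← Submodule.ideal_span_singleton_smul, ← Submodule.range_mkQ I, LinearMap.range_eq_map,
      ← Submodule.map_smul'', smul_eq_mul, Ideal.mul_top]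
  (Submodule.quotEquivOfEq _ _ smul_top).trans
    (Submodule.quotientQuotientEquivQuotientSup I (Ideal.span {r}))

section IdealQuot

open CategoryTheory

variable {R : Type} [CommRing R] {A B C : Ideal R}

/-- The sequence `0 → B/C → A/C → A/B → 0` attached to ideals `C ≤ B ≤ A`. -/
noncomputable def idealQuotShortComplex (hCB : C ≤ B) (hBA : B ≤ A) :
    ShortComplex (ModuleCat R) :=
  ModuleCat.shortComplexOfCompEqZero
    (Submodule.mapQ (Submodule.comap B.subtype C) (Submodule.comap A.subtype C)
      (Submodule.inclusion hBA) le_rfl : idealQuot B C →ₗ[R] idealQuot A C)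
    (Submodule.factor (Submodule.comap_mono hCB) : idealQuot A C →ₗ[R] idealQuot A B)
    (Submodule.linearMap_qext _ (LinearMap.ext fun b =>
      (Submodule.Quotient.mk_eq_zero _).mpr b.2))

theorem shortExact_idealQuotShortComplex (hCB : C ≤ B) (hBA : B ≤ A) :
    (idealQuotShortComplex hCB hBA).ShortExact := by
  refine ModuleCat.shortComplex_shortExact _ ?_ ?_
    (Submodule.factor_surjective (Submodule.comap_mono hCB))
  · refine LinearMap.exact_of_comp_of_mem_range
      (ModuleCat.hom_ext_iff.mp (idealQuotShortComplex hCB hBA).zero) ?_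
    intro y hy
    obtain ⟨a, rfl⟩ := Submodule.Quotient.mk_surjective _ y
    have ha : (a : R) ∈ B := (Submodule.Quotient.mk_eq_zero (B.submoduleOf A)).mp hy
    exact ⟨Submodule.Quotient.mk ⟨a, ha⟩, rfl⟩
  · refine (injective_iff_map_eq_zero _).mpr fun y hy => ?_
    obtain ⟨b, rfl⟩ := Submodule.Quotient.mk_surjective _ y
    have hb : (b : R) ∈ C := (Submodule.Quotient.mk_eq_zero (C.submoduleOf A)).mp hy
    exact (Submodule.Quotient.mk_eq_zero (C.submoduleOf B)).mpr hb

theorem subsingleton_idealQuot (h : A ≤ B) : Subsingleton (idealQuot A B) := by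
  rw [Submodule.Quotient.subsingleton_iff, Submodule.comap_subtype_eq_top]
  exact h

/-- Multiplication by `x` identifies `R ⧸ (B : x)` with `(B + (x)) / B`. -/
noncomputable def quotColonEquivIdealQuot (B : Ideal R) (x : R) :
    (R ⧸ B.colon {x}) ≃ₗ[R] idealQuot (B ⊔ Ideal.span {x}) B := by
  have hx : x ∈ B ⊔ Ideal.span {x} :=
    Ideal.mem_sup_right (Ideal.mem_span_singleton_self x)
  let f : R →ₗ[R] idealQuot (B ⊔ Ideal.span {x}) B :=
    LinearMap.toSpanSingleton R _ (Submodule.Quotient.mk ⟨x, hx⟩)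
  have ker_f : LinearMap.ker f = B.colon {x} := by
    ext r
    rw [LinearMap.mem_ker, LinearMap.toSpanSingleton_apply, ← Submodule.Quotient.mk_smul,
      Submodule.Quotient.mk_eq_zero, Submodule.mem_colon_singleton]
    rfl
  have f_surjective : Function.Surjective f := by
    intro y
    obtain ⟨⟨_, hy⟩, rfl⟩ := Submodule.Quotient.mk_surjective _ y
    obtain ⟨r, b, hb, rfl⟩ := Ideal.mem_span_singleton_sup.mp (sup_comm B _ ▸ hy)
    refine ⟨r, (Submodule.Quotient.eq _).mpr ?_⟩
    change r * x - (r * x + b) ∈ B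
    rw [sub_add_cancel_left]
    exact neg_mem hb
  exact (Submodule.quotEquivOfEq _ _ ker_f.symm).trans (f.quotKerEquivOfSurjective f_surjective)

theorem smul_top_idealQuot_lt_top [IsNoetherianRing R] {𝔪 P : Ideal R} [P.IsPrime] (hBP : B ≤ P)
    (hAP : ¬ A ≤ P) (hP : P ⊔ 𝔪 ≠ ⊤) :
    𝔪 • (⊤ : Submodule R (idealQuot A B)) < ⊤ := by
  rw [lt_top_iff_ne_top]
  intro smul_top
  obtain ⟨r, hr, hrs⟩ := Submodule.exists_mem_and_smul_eq_self_of_fg_of_le_smul 𝔪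
    (⊤ : Submodule R (idealQuot A B)) Module.Finite.fg_top smul_top.ge
  obtain ⟨a, ha, haP⟩ := SetLike.not_le_iff_exists.mp hAP
  have mul_mem : (r - 1) * a ∈ P := by
    rw [sub_mul, one_mul]
    have smul_eq := hrs (Submodule.Quotient.mk ⟨a, ha⟩) trivial
    exact hBP ((Submodule.Quotient.eq (B.submoduleOf A)).mp smul_eq)
  have sub_mem : r - 1 ∈ P := (Ideal.IsPrime.mem_or_mem ‹_› mul_mem).resolve_right haP
  refine hP ((Ideal.eq_top_iff_one _).mpr ?_)
  rw [← sub_sub_self r 1]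
  exact Submodule.sub_mem _ (Ideal.mem_sup_right hr) (Ideal.mem_sup_left sub_mem)

theorem moduleDepth_idealQuot_eq_iff [IsNoetherianRing R] {𝔪 : Ideal R} {d : ℕ} (hCB : C ≤ B)
    (hBA : B ≤ A) (hAB : 𝔪 • (⊤ : Submodule R (idealQuot A B)) < ⊤)
    (hAC : 𝔪 • (⊤ : Submodule R (idealQuot A C)) < ⊤)
    (hBC : ExtVanishesBelow (ModuleCat.of R (R ⧸ 𝔪)) (ModuleCat.of R (idealQuot B C)) (d + 2)) :
    moduleDepth 𝔪 (idealQuot A B) = d ↔ moduleDepth 𝔪 (idealQuot A C) = d := by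
  have hS := shortExact_idealQuotShortComplex hCB hBA
  have extVanishesBelow_iff (k : ℕ) (hk : k ≤ d + 1) :
      ExtVanishesBelow (ModuleCat.of R (R ⧸ 𝔪)) (ModuleCat.of R (idealQuot A B)) k ↔
        ExtVanishesBelow (ModuleCat.of R (R ⧸ 𝔪)) (ModuleCat.of R (idealQuot A C)) k :=
    ⟨.middle_of_shortExact hS (hBC.mono (by lia)),
      .right_of_shortExact hS (hBC.mono (by lia))⟩
  rw [moduleDepth_eq_iff hAB, moduleDepth_eq_iff hAC, extVanishesBelow_iff d d.le_succ,
    extVanishesBelow_iff (d + 1) le_rfl]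

end IdealQuot

section SquarefreeMonomial

open CategoryTheory

variable {K : Type} [Field K] {n : ℕ} {T U : Finset (Fin n)}
  {A B : Ideal (MvPolynomial (Fin n) K)} {P Q : ℕ → Prop} {k : ℕ}

theorem sqMon_insert {i : Fin n} (hi : i ∉ T) : sqMon K (insert i T) = X i * sqMon K T :=
  Finset.prod_insert hi

theorem sqMon_dvd_monomial_support (m : Fin n →₀ ℕ) (c : K) :
    sqMon K m.support ∣ monomial m c := by
  rw [monomial_eq]
  exact Dvd.dvd.mul_left (Finset.prod_dvd_prod_of_dvd _ _ fun i hi =>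
    dvd_pow_self _ (Finsupp.mem_support_iff.mp hi)) _

theorem sqMon_mem_of_subset (hUT : U ⊆ T) (hU : sqMon K U ∈ A) : sqMon K T ∈ A :=
  Ideal.mem_of_dvd A (Finset.prod_dvd_prod_of_subset _ _ _ hUT) hU

variable (K T) in
/-- The prime ideal generated by the variables outside `T`. For `A` generated by square-free
monomials, those containing `A` are the primes of the faces of the simplicial complex whose
Stanley–Reisner ideal is `A`. -/
noncomputable def faceIdeal : Ideal (MvPolynomial (Fin n) K) :=
  Ideal.span (X '' {i | i ∉ T})

theorem mem_faceIdeal_iff {f : MvPolynomial (Fin n) K} :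
    f ∈ faceIdeal K T ↔ ∀ m ∈ f.support, ∃ i ∉ T, m i ≠ 0 :=
  mem_ideal_span_X_image

theorem X_mem_faceIdeal {i : Fin n} : X i ∈ faceIdeal K T ↔ i ∉ T := by
  simp [mem_faceIdeal_iff, support_X, Finsupp.single_apply]

theorem faceIdeal_eq_ker_aeval :
    faceIdeal K T = RingHom.ker
      (aeval (R := K) fun i => if i ∈ T then (X i : MvPolynomial (Fin n) K) else 0) := by
  set φ := aeval (R := K) fun i => if i ∈ T then (X i : MvPolynomial (Fin n) K) else 0
  apply le_antisymm
  · rw [faceIdeal, Ideal.span_le]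
    rintro _ ⟨i, hi, rfl⟩
    exact (aeval_X _ i).trans (if_neg hi)
  · intro f hf
    have mk_comp_φ : (Ideal.Quotient.mkₐ K (faceIdeal K T)).comp φ = Ideal.Quotient.mkₐ K _ := by
      ext i
      by_cases hi : i ∈ T
      · simp [φ, hi]
      · simpa [φ, hi] using (Ideal.Quotient.eq_zero_iff_mem.mpr (X_mem_faceIdeal.mpr hi)).symm
    rw [← Ideal.Quotient.eq_zero_iff_mem, ← Ideal.Quotient.mkₐ_eq_mk K, ← mk_comp_φ,
      AlgHom.comp_apply, RingHom.mem_ker.mp hf, map_zero]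

instance isPrime_faceIdeal : (faceIdeal K T).IsPrime :=
  faceIdeal_eq_ker_aeval (K := K) (T := T) ▸ RingHom.ker_isPrime _

theorem sqMon_mem_faceIdeal : sqMon K U ∈ faceIdeal K T ↔ ¬ U ⊆ T := by
  simp only [sqMon, Ideal.IsPrime.prod_mem_iff, X_mem_faceIdeal, Finset.not_subset]

theorem faceIdeal_insert_sup_span_X {i : Fin n} (hi : i ∉ T) :
    faceIdeal K (insert i T) ⊔ Ideal.span {X i} = faceIdeal K T := by
  have compl_eq : {j | j ∉ insert i T} ∪ {i} = {j | j ∉ T} := by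
    ext j
    grind
  rw [faceIdeal, faceIdeal, ← Set.image_singleton, ← Ideal.span_union, ← Set.image_union, compl_eq]

theorem faceIdeal_sup_maxGraded_ne_top : faceIdeal K T ⊔ maxGraded K n ≠ ⊤ := by
  have hle : faceIdeal K T ⊔ maxGraded K n ≤ faceIdeal K (∅ : Finset (Fin n)) := by
    rw [faceIdeal, maxGraded, ← Ideal.span_union, Ideal.span_le, Set.union_subset_iff]
    constructor <;> rintro _ ⟨i, -, rfl⟩ <;> exact X_mem_faceIdeal.mpr (Finset.notMem_empty i)
  exact ne_top_of_le_ne_top Ideal.IsPrime.ne_top' hle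

theorem mem_of_forall_mem_faceIdeal {f : MvPolynomial (Fin n) K}
    (hf : ∀ T, sqMon K T ∉ A → f ∈ faceIdeal K T) : f ∈ A := by
  rw [← support_sum_monomial_coeff f]
  refine A.sum_mem fun m hm => ?_
  have support_mem : sqMon K m.support ∈ A := by
    by_contra h
    obtain ⟨i, hi, hmi⟩ := mem_faceIdeal_iff.mp (hf _ h) m hm
    exact hi (Finsupp.mem_support_iff.mpr hmi)
  exact Ideal.mem_of_dvd A (sqMon_dvd_monomial_support m _) support_mem

theorem extVanishesBelow_quotient_faceIdeal (T : Finset (Fin n)) :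
    ExtVanishesBelow
      (ModuleCat.of (MvPolynomial (Fin n) K) (MvPolynomial (Fin n) K ⧸ maxGraded K n))
      (ModuleCat.of _ (MvPolynomial (Fin n) K ⧸ faceIdeal K T)) T.card := by
  induction T using Finset.induction_on with
  | empty => exact fun i hi => absurd hi i.not_lt_zero
  | insert i T hi ih =>
    rw [Finset.card_insert_of_notMem hi]
    have X_mem_annihilator : X i ∈ Module.annihilator (MvPolynomial (Fin n) K)
        (MvPolynomial (Fin n) K ⧸ maxGraded K n) := by
      rw [Ideal.annihilator_quotient]
      exact Ideal.subset_span ⟨i, rfl⟩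
    have X_regular : IsSMulRegular (MvPolynomial (Fin n) K ⧸ faceIdeal K (insert i T))
        (X i : MvPolynomial (Fin n) K) :=
      (isSMulRegular_quotient_iff_mem_of_smul_mem _ _).mpr fun f hf =>
        (Ideal.IsPrime.mem_or_mem inferInstance hf).resolve_left fun h =>
          X_mem_faceIdeal.mp h (Finset.mem_insert_self i T)
    let e := quotSMulTopQuotientEquiv (faceIdeal K (insert i T)) (X i)
    rw [faceIdeal_insert_sup_span_X hi] at e
    exact .succ_of_quotSMulTop X_mem_annihilator X_regular (ih.of_iso e.symm.toModuleIso)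

namespace GenBySqMonOfDeg

theorem sup (hA : GenBySqMonOfDeg K P A) (hB : GenBySqMonOfDeg K Q B) :
    GenBySqMonOfDeg K (fun k => P k ∨ Q k) (A ⊔ B) := by
  obtain ⟨G, hG, rfl⟩ := hA
  obtain ⟨H, hH, rfl⟩ := hB
  refine ⟨G ∪ H, fun T hT => hT.imp (hG T) (hH T), ?_⟩
  rw [Set.image_union, Ideal.span_union]

theorem span_singleton (T : Finset (Fin n)) :
    GenBySqMonOfDeg K (fun k => k = T.card) (Ideal.span {sqMon K T}) :=
  ⟨{T}, fun _ hU => congrArg _ hU, by rw [Set.image_singleton]⟩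

theorem exists_subset_of_not_le_faceIdeal (hA : GenBySqMonOfDeg K P A)
    (h : ¬ A ≤ faceIdeal K T) : ∃ U ⊆ T, P U.card ∧ sqMon K U ∈ A := by
  obtain ⟨G, hG, rfl⟩ := hA
  contrapose! h
  rw [Ideal.span_le]
  rintro _ ⟨U, hU, rfl⟩
  exact sqMon_mem_faceIdeal.mpr fun hUT => h U hUT (hG U hU) (Ideal.subset_span ⟨U, hU, rfl⟩)

theorem exists_subset_of_sqMon_mem (hA : GenBySqMonOfDeg K P A) (hT : sqMon K T ∈ A) :
    ∃ U ⊆ T, P U.card ∧ sqMon K U ∈ A :=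
  hA.exists_subset_of_not_le_faceIdeal fun h => sqMon_mem_faceIdeal.mp (h hT) subset_rfl

theorem le_faceIdeal_iff (hA : GenBySqMonOfDeg K P A) :
    A ≤ faceIdeal K T ↔ sqMon K T ∉ A := by
  refine ⟨fun h hT => sqMon_mem_faceIdeal.mp (h hT) subset_rfl, fun hT => ?_⟩
  by_contra h
  obtain ⟨U, hUT, -, hU⟩ := hA.exists_subset_of_not_le_faceIdeal h
  exact hT (sqMon_mem_of_subset hUT hU)

theorem le_iff (hA : GenBySqMonOfDeg K P A) : A ≤ B ↔ ∀ T, sqMon K T ∈ A → sqMon K T ∈ B :=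
  ⟨fun h _ hT => h hT, fun h _ hf => mem_of_forall_mem_faceIdeal fun T hT =>
    hA.le_faceIdeal_iff.mpr (mt (h T) hT) hf⟩

theorem sqMon_mem_sup_iff (hA : GenBySqMonOfDeg K P A) (hB : GenBySqMonOfDeg K Q B) :
    sqMon K T ∈ A ⊔ B ↔ sqMon K T ∈ A ∨ sqMon K T ∈ B := by
  rw [← not_iff_not, not_or, ← (hA.sup hB).le_faceIdeal_iff, sup_le_iff, hA.le_faceIdeal_iff,
    hB.le_faceIdeal_iff]

theorem smul_top_idealQuot_lt_top (hB : GenBySqMonOfDeg K P B) (hAB : ¬ A ≤ B) :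
    maxGraded K n • (⊤ : Submodule (MvPolynomial (Fin n) K) (idealQuot A B)) < ⊤ := by
  obtain ⟨f, hfA, hfB⟩ := SetLike.not_le_iff_exists.mp hAB
  obtain ⟨T, hTB, hfT⟩ : ∃ T, sqMon K T ∉ B ∧ f ∉ faceIdeal K T := by
    contrapose! hfB
    exact mem_of_forall_mem_faceIdeal hfB
  exact _root_.smul_top_idealQuot_lt_top (hB.le_faceIdeal_iff.mpr hTB) (fun h => hfT (h hfA))
    faceIdeal_sup_maxGraded_ne_top

theorem colon_sqMon_eq_faceIdeal (hB : GenBySqMonOfDeg K P B) (hT : sqMon K T ∉ B)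
    (hmax : ∀ i ∉ T, sqMon K (insert i T) ∈ B) : B.colon {sqMon K T} = faceIdeal K T := by
  apply le_antisymm
  · intro f hf
    exact (Ideal.IsPrime.mem_or_mem inferInstance (hB.le_faceIdeal_iff.mpr hT
      (Submodule.mem_colon_singleton.mp hf))).resolve_right
      fun h => sqMon_mem_faceIdeal.mp h subset_rfl
  · rw [faceIdeal, Ideal.span_le]
    rintro _ ⟨i, hi, rfl⟩
    rw [SetLike.mem_coe, Submodule.mem_colon_singleton, smul_eq_mul, ← sqMon_insert hi]
    exact hmax i hi

theorem exists_maximal_sqMon_mem_diff (hA : GenBySqMonOfDeg K P A) (hAB : ¬ A ≤ B) :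
    ∃ T, sqMon K T ∈ A ∧ sqMon K T ∉ B ∧ ∀ i ∉ T, sqMon K (insert i T) ∈ B := by
  have hne : {T | sqMon K T ∈ A ∧ sqMon K T ∉ B}.Nonempty := by
    simpa [Set.Nonempty, hA.le_iff] using hAB
  obtain ⟨T, hT⟩ := (Set.toFinite _).exists_maximal hne
  refine ⟨T, hT.prop.1, hT.prop.2, fun i hi => ?_⟩
  by_contra hB
  have hA' := sqMon_mem_of_subset (Finset.subset_insert i T) hT.prop.1
  exact hi (hT.le_of_ge ⟨hA', hB⟩ (Finset.subset_insert i T) (Finset.mem_insert_self i T))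

theorem extVanishesBelow_idealQuot (hA : GenBySqMonOfDeg K P A) (hB : GenBySqMonOfDeg K Q B)
    (hBA : B ≤ A) (hk : ∀ T, sqMon K T ∈ A → sqMon K T ∉ B → k ≤ T.card) :
    ExtVanishesBelow
      (ModuleCat.of (MvPolynomial (Fin n) K) (MvPolynomial (Fin n) K ⧸ maxGraded K n))
      (ModuleCat.of _ (idealQuot A B)) k := by
  induction B using WellFoundedGT.induction generalizing Q with
  | ind B ih =>
  by_cases hAB : A ≤ B
  · have := subsingleton_idealQuot hAB
    exact .of_isZero (ModuleCat.isZero_of_subsingleton _)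
  obtain ⟨T, hTA, hTB, hmax⟩ := hA.exists_maximal_sqMon_mem_diff hAB
  let B' := B ⊔ Ideal.span {sqMon K T}
  have hBB' : B < B' := Submodule.lt_sup_iff_notMem.mpr hTB
  have hB'A : B' ≤ A := sup_le hBA ((Ideal.span_singleton_le_iff_mem A).mpr hTA)
  let e := quotColonEquivIdealQuot B (sqMon K T)
  rw [hB.colon_sqMon_eq_faceIdeal hTB hmax] at e
  exact .middle_of_shortExact (shortExact_idealQuotShortComplex hBB'.le hB'A)
    (((extVanishesBelow_quotient_faceIdeal T).mono (hk T hTA hTB)).of_iso e.toModuleIso)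
    (ih B' hBB' (hB.sup (span_singleton T)) hB'A fun U hUA hUB' =>
      hk U hUA fun hUB => hUB' (hBB'.le hUB))

end GenBySqMonOfDeg

end SquarefreeMonomial

theorem stmt_1_general {n : ℕ} {K : Type} [Field K] {d : ℕ} {P : ℕ → Prop}
    {I J E F : Ideal (MvPolynomial (Fin n) K)} (hJI : J < I) (hJEF : J = E + F)
    (hE : GenBySqMonOfDeg K P E) (hF : GenBySqMonOfDeg K (fun k => d + 1 < k) F) :
    moduleDepth (maxGraded K n) (idealQuot I J) = (d : ℕ∞) ↔
      moduleDepth (maxGraded K n) (idealQuot I E) = (d : ℕ∞) := by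
  rw [Submodule.add_eq_sup] at hJEF
  subst hJEF
  have hJ := hE.sup hF
  have hEJ : E ≤ E ⊔ F := le_sup_left
  have card_ge (T : Finset (Fin n)) (hTJ : sqMon K T ∈ E ⊔ F) (hTE : sqMon K T ∉ E) :
      d + 2 ≤ T.card := by
    have hTF := ((hE.sqMon_mem_sup_iff hF).mp hTJ).resolve_left hTE
    obtain ⟨U, hUT, hU, -⟩ := hF.exists_subset_of_sqMon_mem hTF
    exact hU.trans_le (Finset.card_le_card hUT)
  exact moduleDepth_idealQuot_eq_iff hEJ hJI.le
    (hJ.smul_top_idealQuot_lt_top hJI.not_ge)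
    (hE.smul_top_idealQuot_lt_top fun h => hJI.not_ge (h.trans hEJ))
    (hJ.extVanishesBelow_idealQuot hE hEJ card_ge)

/-- Lemma 1.2. -/
theorem stmt_1 (n : ℕ) (K : Type) [Field K] (d : ℕ) (hd : 0 < d)
    (I J E F : Ideal (MvPolynomial (Fin n) K)) (hI0 : I ≠ ⊥) (hJ0 : J ≠ ⊥)
    (hJI : J < I) (hI : GenBySqMonOfDeg K (fun k => d ≤ k) I)
    (hJEF : J = E + F) (hFE : ¬ F ≤ E)
    (hE : GenBySqMonOfDeg K (fun k => k = d + 1) E)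
    (hF : GenBySqMonOfDeg K (fun k => d + 1 < k) F) :
    moduleDepth (maxGraded K n) (idealQuot I J) = (d : ℕ∞) ↔
      moduleDepth (maxGraded K n) (idealQuot I E) = (d : ℕ∞) :=
  stmt_1_general hJI hJEF hE hF
end

section
/- Suppose there exists i ∈ {1,…,r} such that every square-free monomial of degree d+1 that is a multiple of f_i belongs to J. Then depth_S (I/J) = d. -/
open MvPolynomial

/-!
Let `x_T` be a square-free monomial of degree `d` in `I`, not in `J`, all of whose square-free
multiples of degree `d + 1` lie in `J`. Then `(J : x_T)` is the prime `P_T` generated by the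
variables outside `T`, so `P_T` is associated to `I / J`. A regular sequence on `I / J` yields a
strictly increasing chain of primes of the same length starting at `P_T`, whence
`depth (I / J) ≤ dim S / P_T = d`.

Conversely, adjoin to `J` one after the other square-free monomials `x_U` of `I` that are maximal
outside the ideal reached so far: the factors of the resulting filtration of `I / J` are the
polynomial rings `S / P_U` with `#U ≥ d`. Since `Ext^i (S / m, -)` vanishes on them for `i < d`, it
vanishes on `I / J`, and Rees' characterization of depth gives `depth (I / J) ≥ d`.
-/

section AssociatedPrimes

open RingTheory.Sequence

variable {R M : Type*} [CommRing R] [AddCommGroup M] [Module R M]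

theorem isSMulRegular_quotient_torsionBySet {x : R} (hx : IsSMulRegular M x) (s : Set R) :
    IsSMulRegular (M ⧸ Submodule.torsionBySet R M s) x := by
  refine (isSMulRegular_quotient_iff_mem_of_smul_mem _ x).2 fun v hv => ?_
  rw [Submodule.mem_torsionBySet_iff] at hv ⊢
  exact fun a => hx.right_eq_zero_of_smul <| by rw [smul_comm, hv a]

theorem quotSMulTop_map_subtype_injective {x : R} {N : Submodule R M}
    (hx : IsSMulRegular (M ⧸ N) x) : Function.Injective (QuotSMulTop.map x N.subtype) := by
  have hexact : Function.Exact (QuotSMulTop.map x (0 : N →ₗ[R] N)) (QuotSMulTop.map x N.subtype) :=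
    QuotSMulTop.map_first_exact_on_four_term_exact_of_isSMulRegular_last
      ((LinearMap.exact_zero_iff_injective N N.subtype).2 N.injective_subtype)
      (LinearMap.exact_subtype_mkQ N) hx
  rw [map_zero] at hexact
  exact (LinearMap.exact_zero_iff_injective _ _).1 hexact

variable [IsNoetherianRing R]

theorem annihilator_torsionBySet_of_isAssociatedPrime {P : Ideal R} (hP : IsAssociatedPrime P M) :
    Module.annihilator R (Submodule.torsionBySet R M (P : Set R)) = P := by
  obtain ⟨-, u, hu⟩ := isAssociatedPrime_iff.1 hP
  have smul_u (r : R) : r ∈ P ↔ r • u = 0 := by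
    rw [hu, Submodule.mem_colon_singleton, Submodule.mem_bot]
  have u_mem : u ∈ Submodule.torsionBySet R M (P : Set R) :=
    (Submodule.mem_torsionBySet_iff _ _).2 fun p => (smul_u p).1 p.2
  refine le_antisymm (fun r hr => ?_) fun r hr => Module.mem_annihilator.2 fun v =>
    Submodule.torsionBySet_isTorsionBySet (P : Set R) (x := v) (a := ⟨r, hr⟩)
  exact (smul_u r).2 <| congrArg Subtype.val (Module.mem_annihilator.1 hr ⟨u, u_mem⟩)

theorem notMem_of_isAssociatedPrime_of_isSMulRegular {P : Ideal R} (hP : IsAssociatedPrime P M)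
    {x : R} (hx : IsSMulRegular M x) : x ∉ P := fun hxP => by
  have mem_compl : x ∈ {r : R | IsSMulRegular M r}ᶜ := by
    rw [← biUnion_associatedPrimes_eq_compl_regular]
    exact Set.mem_biUnion hP hxP
  exact mem_compl hx

-- The submodule `N` of vectors killed by `P` satisfies `N / xN ↪ M / xM`, and `N / xN` has support
-- `V(P + (x))`.
theorem isAssociatedPrime_quotSMulTop_of_mem_minimalPrimes [Module.Finite R M] {P Q : Ideal R}
    (hP : IsAssociatedPrime P M) {x : R} (hx : IsSMulRegular M x)
    (hQ : Q ∈ (P ⊔ Ideal.span {x}).minimalPrimes) : IsAssociatedPrime Q (QuotSMulTop x M) := by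
  let N := Submodule.torsionBySet R M (P : Set R)
  have support_eq : Module.support R (QuotSMulTop x N) =
      PrimeSpectrum.zeroLocus (P ⊔ Ideal.span {x} : Ideal R) := by
    rw [Module.support_quotSMulTop, Module.support_eq_zeroLocus,
      annihilator_torsionBySet_of_isAssociatedPrime hP, PrimeSpectrum.zeroLocus_sup,
      PrimeSpectrum.zeroLocus_span]
  have minimalPrimes_eq : (Module.annihilator R (QuotSMulTop x N)).minimalPrimes =
      (P ⊔ Ideal.span {x}).minimalPrimes := by
    rw [Module.support_eq_zeroLocus, PrimeSpectrum.zeroLocus_eq_iff] at support_eq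
    rw [← Ideal.radical_minimalPrimes, support_eq, Ideal.radical_minimalPrimes]
  have hQN : IsAssociatedPrime Q (QuotSMulTop x N) :=
    Module.associatedPrimes.minimalPrimes_annihilator_subset_associatedPrimes R _
      (minimalPrimes_eq ▸ hQ)
  exact hQN.map_of_injective _ <|
    quotSMulTop_map_subtype_injective (isSMulRegular_quotient_torsionBySet hx _)

theorem length_le_coheight_of_isWeaklyRegular [Module.Finite R M] {P m : Ideal R} [m.IsPrime]
    (hP : IsAssociatedPrime P M) (hPm : P ≤ m) {rs : List R} (hrs : ∀ r ∈ rs, r ∈ m)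
    (hreg : IsWeaklyRegular M rs) :
    (rs.length : ℕ∞) ≤ Order.coheight (⟨P, hP.isPrime⟩ : PrimeSpectrum R) := by
  induction rs generalizing M P with
  | nil => simp
  | cons x rs ih =>
    obtain ⟨hx, hreg⟩ := (isWeaklyRegular_cons_iff M x rs).1 hreg
    obtain ⟨Q, hQ, hQm⟩ := Ideal.exists_minimalPrimes_le
      (sup_le hPm ((Ideal.span_singleton_le_iff_mem m).2 (hrs x List.mem_cons_self)))
    have hQass := isAssociatedPrime_quotSMulTop_of_mem_minimalPrimes hP hx hQ
    have P_lt_Q : P < Q := by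
      refine lt_of_le_of_ne (le_sup_left.trans hQ.1.2) fun h => ?_
      exact notMem_of_isAssociatedPrime_of_isSMulRegular hP hx
        (h ▸ hQ.1.2 (Ideal.mem_sup_right (Ideal.mem_span_singleton_self x)))
    calc ((x :: rs).length : ℕ∞) = rs.length + 1 := by simp
      _ ≤ Order.coheight (⟨Q, hQass.isPrime⟩ : PrimeSpectrum R) + 1 := by
        gcongr
        exact ih hQass hQm (fun r hr => hrs r (List.mem_cons_of_mem x hr)) hreg
      _ ≤ Order.coheight (⟨P, hP.isPrime⟩ : PrimeSpectrum R) :=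
        Order.coheight_add_one_le P_lt_Q

theorem length_le_ringKrullDim_quotient_of_isWeaklyRegular [Module.Finite R M] {P m : Ideal R}
    [m.IsPrime] (hP : IsAssociatedPrime P M) (hPm : P ≤ m) {rs : List R} (hrs : ∀ r ∈ rs, r ∈ m)
    (hreg : IsWeaklyRegular M rs) : ((rs.length : ℕ∞) : WithBot ℕ∞) ≤ ringKrullDim (R ⧸ P) := by
  have coheight_eq : (Order.coheight (⟨P, hP.isPrime⟩ : PrimeSpectrum R) : WithBot ℕ∞) =
      ringKrullDim (R ⧸ P) := by
    rw [ringKrullDim_quotient, Order.coheight_eq_krullDim_Ici]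
    rfl
  exact coheight_eq ▸ WithBot.coe_le_coe.2 (length_le_coheight_of_isWeaklyRegular hP hPm hrs hreg)

end AssociatedPrimes

section Ext

open CategoryTheory Abelian

theorem subsingleton_ext_of_shortExact {C : Type*} [Category C] [Abelian C] [HasExt C]
    {S : ShortComplex C} (hS : S.ShortExact) (N : C) (i : ℕ) (h₁ : Subsingleton (Ext N S.X₁ i))
    (h₃ : Subsingleton (Ext N S.X₃ i)) : Subsingleton (Ext N S.X₂ i) := by
  refine subsingleton_of_forall_eq 0 fun e => ?_
  obtain ⟨e₁, rfl⟩ := Ext.covariant_sequence_exact₂ N hS e (Subsingleton.elim _ _)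
  rw [Subsingleton.elim e₁ 0, Ext.zero_comp]

theorem subsingleton_ext_of_isZero {C : Type*} [Category C] [Abelian C] [HasExt C] (N : C) {Z : C}
    (hZ : Limits.IsZero Z) (i : ℕ) : Subsingleton (Ext N Z i) := by
  refine subsingleton_of_forall_eq 0 fun e => ?_
  rw [← e.comp_mk₀_id, (Limits.IsZero.iff_id_eq_zero Z).1 hZ, Ext.mk₀_zero, Ext.comp_zero]

universe u

variable {R M : Type u} [CommRing R] [AddCommGroup M] [Module R M]

theorem bot_colon_singleton_mkQ (p : Submodule R M) (x : M) :
    (⊥ : Submodule R (M ⧸ p)).colon {p.mkQ x} = p.colon {x} := by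
  ext r
  rw [Submodule.mem_colon_singleton, Submodule.mem_colon_singleton, ← map_smul, Submodule.mem_bot,
    ← LinearMap.mem_ker, Submodule.ker_mkQ]

theorem ker_toSpanSingleton_mkQ (p : Submodule R M) (x : M) :
    LinearMap.ker (LinearMap.toSpanSingleton R (M ⧸ p) (p.mkQ x)) = p.colon {x} := by
  ext r
  rw [← bot_colon_singleton_mkQ, Submodule.mem_colon_singleton, LinearMap.mem_ker,
    LinearMap.toSpanSingleton_apply, Submodule.mem_bot]

theorem subsingleton_ext_quotient_of_colon_singleton (N : ModuleCat.{u} R) {p : Submodule R M}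
    (x : M) (i : ℕ) (hcolon : Subsingleton (Ext N (ModuleCat.of R (R ⧸ p.colon {x})) i))
    (hsup : Subsingleton (Ext N (ModuleCat.of R (M ⧸ p ⊔ R ∙ x)) i)) :
    Subsingleton (Ext N (ModuleCat.of R (M ⧸ p)) i) := by
  let φ := LinearMap.toSpanSingleton R (M ⧸ p) (p.mkQ x)
  let f : (R ⧸ p.colon {x}) →ₗ[R] M ⧸ p :=
    (p.colon {x}).liftQ φ (ker_toSpanSingleton_mkQ p x).ge
  let g : (M ⧸ p) →ₗ[R] M ⧸ p ⊔ R ∙ x := Submodule.factor le_sup_left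
  have f_injective : Function.Injective f :=
    LinearMap.ker_eq_bot.1 <| Submodule.ker_liftQ_eq_bot' _ _ (ker_toSpanSingleton_mkQ p x).symm
  have g_surjective : Function.Surjective g := Submodule.factor_surjective _
  have exact : Function.Exact f g := LinearMap.exact_iff.2 <| by
    have range_f : LinearMap.range f = (R ∙ x).map p.mkQ := by
      rw [Submodule.range_liftQ, LinearMap.range_toSpanSingleton, Submodule.map_span,
        Set.image_singleton]
    have ker_g : LinearMap.ker g = (R ∙ x).map p.mkQ :=
      calc LinearMap.ker g = (p ⊔ R ∙ x).map p.mkQ :=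
            (Submodule.ker_liftQ _ _ _).trans (by rw [LinearMap.comp_id, Submodule.ker_mkQ])
        _ = (R ∙ x).map p.mkQ := by rw [Submodule.map_sup, Submodule.mkQ_map_self, bot_sup_eq]
    rw [ker_g, range_f]
  exact subsingleton_ext_of_shortExact
    (ModuleCat.shortComplex_shortExact (ModuleCat.shortComplexOfCompEqZero f g
      exact.linearMap_comp_eq_zero) exact f_injective g_surjective) N i hcolon hsup

end Ext

section IdealSubmodules

variable {R : Type*} [CommRing R]

theorem comap_subtype_colon_singleton (I J : Ideal R) (x : I) :
    (Submodule.comap I.subtype J).colon {x} = J.colon {(x : R)} := by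
  ext r
  simp only [Submodule.mem_colon_singleton, Submodule.mem_comap, map_smul, Submodule.subtype_apply]

theorem comap_subtype_sup_span_singleton (I J : Ideal R) (x : I) :
    Submodule.comap I.subtype J ⊔ Submodule.span R {x} =
      Submodule.comap I.subtype (J ⊔ Ideal.span {(x : R)}) := by
  refine le_antisymm (sup_le (Submodule.comap_mono le_sup_left) ?_) fun v hv => ?_
  · exact (Submodule.span_singleton_le_iff_mem _ _).2
      (Ideal.mem_sup_right (Ideal.mem_span_singleton_self _))
  · obtain ⟨y, hy, z, hz, hyz⟩ := Submodule.mem_sup.1 hv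
    obtain ⟨a, rfl⟩ := Ideal.mem_span_singleton'.1 hz
    have hsub : v - a • x ∈ Submodule.comap I.subtype J :=
      show (v : R) - a * x ∈ J from eq_sub_of_add_eq hyz ▸ hy
    exact Submodule.mem_sup.2
      ⟨_, hsub, _, Submodule.smul_mem _ a (Submodule.mem_span_singleton_self x), sub_add_cancel _ _⟩

end IdealSubmodules

section Depth

universe u

open RingTheory.Sequence CategoryTheory Abelian

open scoped Pointwise in
theorem smul_top_quotient_eq_map_span_singleton {R : Type*} [CommRing R] (I : Ideal R) (x : R) :
    x • (⊤ : Submodule R (R ⧸ I)) = Submodule.map I.mkQ (Ideal.span {x}) := by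
  rw [← Submodule.ideal_span_singleton_smul, ← Submodule.range_mkQ, ← Submodule.map_top,
    ← Submodule.map_smul'', smul_eq_mul, Ideal.mul_top]

theorem isWeaklyRegular_quotient_cons_iff {R : Type*} [CommRing R] (I : Ideal R) (x : R)
    (rs : List R) :
    IsWeaklyRegular (R ⧸ I) (x :: rs) ↔
      IsSMulRegular (R ⧸ I) x ∧ IsWeaklyRegular (R ⧸ (I ⊔ Ideal.span {x})) rs := by
  rw [isWeaklyRegular_cons_iff]
  refine and_congr_right fun _ => LinearEquiv.isWeaklyRegular_congr ?_ rs
  exact (Submodule.quotEquivOfEq _ _ (smul_top_quotient_eq_map_span_singleton I x)).trans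
    (Submodule.quotientQuotientEquivQuotientSup I (Ideal.span {x}))

theorem smul_top_lt_top_of_annihilator_le {R M : Type*} [CommRing R] [AddCommGroup M] [Module R M]
    [Module.Finite R M] {m : Ideal R} (hm : m ≠ ⊤) (h : Module.annihilator R M ≤ m) :
    m • (⊤ : Submodule R M) < ⊤ := by
  refine lt_top_iff_ne_top.2 fun smul_eq_top => hm ((Ideal.eq_top_iff_one m).2 ?_)
  obtain ⟨r, hr, r_smul⟩ := Submodule.exists_sub_one_mem_and_smul_eq_zero_of_fg_of_le_smul m
    (⊤ : Submodule R M) Module.Finite.fg_top smul_eq_top.ge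
  have r_mem : r ∈ m := h <| Module.mem_annihilator.2 fun v => r_smul v trivial
  simpa using m.sub_mem r_mem hr

theorem support_quotient_eq_zeroLocus {R : Type*} [CommRing R] (I : Ideal R) :
    Module.support R (R ⧸ I) = PrimeSpectrum.zeroLocus I := by
  rw [Module.support_eq_zeroLocus, Ideal.annihilator_quotient]

theorem subsingleton_ext_of_isWeaklyRegular {R M : Type u} [CommRing R] [IsNoetherianRing R]
    [AddCommGroup M] [Module R M] [Module.Finite R M] {m : Ideal R}
    (hm : m • (⊤ : Submodule R M) < ⊤) {rs : List R} (hrs : ∀ r ∈ rs, r ∈ m)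
    (hreg : IsWeaklyRegular M rs) {i : ℕ} (hi : i < rs.length) :
    Subsingleton (Ext (ModuleCat.of R (R ⧸ m)) (ModuleCat.of R M) i) := by
  have ofList_smul_lt_top : Ideal.ofList rs • (⊤ : Submodule R M) < ⊤ :=
    (Submodule.smul_mono_left (Ideal.span_le.2 hrs)).trans_lt hm
  exact ModuleCat.subsingleton_ext_of_exists_isRegular m (ModuleCat.of R (R ⧸ m))
    (support_quotient_eq_zeroLocus m).le (ModuleCat.of R M) hm rs hrs
    ⟨hreg, ofList_smul_lt_top.ne'⟩ i hi

theorem le_moduleDepth_of_subsingleton_ext {R M : Type} [CommRing R] [IsNoetherianRing R]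
    [AddCommGroup M] [Module R M] [Module.Finite R M] {m : Ideal R}
    (hm : m • (⊤ : Submodule R M) < ⊤) {d : ℕ}
    (h : ∀ i < d, Subsingleton (Ext (ModuleCat.of R (R ⧸ m)) (ModuleCat.of R M) i)) :
    d ≤ moduleDepth m M := by
  obtain ⟨rs, rs_length, hrs, hreg⟩ := ModuleCat.exists_isRegular_of_exists_subsingleton_ext m d
    (ModuleCat.of R M) hm (ModuleCat.of R (R ⧸ m)) (support_quotient_eq_zeroLocus m) h
  exact le_sSup ⟨rs, by rw [rs_length], hrs, hreg⟩

theorem moduleDepth_le_of_ringKrullDim_quotient_le {R M : Type} [CommRing R] [IsNoetherianRing R]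
    [AddCommGroup M] [Module R M] [Module.Finite R M] {P m : Ideal R} [m.IsPrime]
    (hP : IsAssociatedPrime P M) (hPm : P ≤ m) {d : ℕ} (hd : ringKrullDim (R ⧸ P) ≤ d) :
    moduleDepth m M ≤ d := by
  refine sSup_le ?_
  rintro _ ⟨rs, rfl, hrs, hreg⟩
  exact WithBot.coe_le_coe.1 <|
    (length_le_ringKrullDim_quotient_of_isWeaklyRegular hP hPm hrs hreg.toIsWeaklyRegular).trans hd

end Depth

section CoordinateIdeals

open RingTheory.Sequence CategoryTheory Abelian

/-- The ideal of `R[σ]` generated by the variables outside `T`: the kernel of the projection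
`R[σ] → R[T]`, and a monomial prime when `R` is a domain. -/
noncomputable def idealOfVarsOutside {σ : Type*} (R : Type*) [CommRing R] (T : Set σ) :
    Ideal (MvPolynomial σ R) :=
  Ideal.span (X '' Tᶜ)

variable {σ R : Type*} [CommRing R]

theorem X_mem_idealOfVarsOutside {T : Set σ} {i : σ} (hi : i ∉ T) :
    (X i : MvPolynomial σ R) ∈ idealOfVarsOutside R T :=
  Ideal.subset_span (Set.mem_image_of_mem X hi)

theorem idealOfVarsOutside_mono {T U : Set σ} (h : T ⊆ U) :
    idealOfVarsOutside R U ≤ idealOfVarsOutside R T :=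
  Ideal.span_mono (Set.image_mono (Set.compl_subset_compl.2 h))

theorem sub_rename_killCompl_mem_idealOfVarsOutside (T : Set σ) (p : MvPolynomial σ R) :
    p - rename Subtype.val (killCompl (Subtype.val_injective (p := (· ∈ T))) p) ∈
      idealOfVarsOutside R T := by
  let π := Ideal.Quotient.mkₐ R (idealOfVarsOutside R T)
  have π_eq : π = π.comp ((rename Subtype.val).comp
      (killCompl (Subtype.val_injective (p := (· ∈ T))))) := by
    refine algHom_ext fun i => ?_
    by_cases hi : i ∈ T
    · rw [AlgHom.comp_apply, AlgHom.comp_apply, ← rename_X Subtype.val (⟨i, hi⟩ : T),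
        killCompl_rename_app]
    · have killCompl_X : killCompl (Subtype.val_injective (p := (· ∈ T))) (X i : MvPolynomial σ R)
          = 0 := by simp [killCompl, hi]
      rw [AlgHom.comp_apply, AlgHom.comp_apply, killCompl_X, map_zero, map_zero]
      exact Ideal.Quotient.eq_zero_iff_mem.2 (X_mem_idealOfVarsOutside hi)
  exact Ideal.Quotient.eq.1 (DFunLike.congr_fun π_eq p)

theorem ker_killCompl_subtypeVal (T : Set σ) :
    RingHom.ker (killCompl (R := R) (Subtype.val_injective (p := (· ∈ T)))) =
      idealOfVarsOutside R T := by
  refine le_antisymm (fun p hp => ?_) (Ideal.span_le.2 ?_)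
  · have := sub_rename_killCompl_mem_idealOfVarsOutside T p
    rwa [RingHom.mem_ker.1 hp, map_zero, sub_zero] at this
  · rintro _ ⟨i, hi, rfl⟩
    have : i ∉ T := hi
    simp [killCompl, this]

theorem ringKrullDim_quotient_idealOfVarsOutside (T : Set σ) :
    ringKrullDim (MvPolynomial σ R ⧸ idealOfVarsOutside R T) = ringKrullDim (MvPolynomial T R) := by
  rw [← ker_killCompl_subtypeVal]
  exact ringKrullDim_eq_of_ringEquiv <| RingHom.quotientKerEquivOfSurjective
    (Function.LeftInverse.surjective (killCompl_rename_app Subtype.val_injective))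

instance [IsDomain R] (T : Set σ) : (idealOfVarsOutside R T).IsPrime :=
  ker_killCompl_subtypeVal (R := R) T ▸ RingHom.ker_isPrime _

theorem X_mem_idealOfVarsOutside_iff [Nontrivial R] {T : Set σ} {i : σ} :
    (X i : MvPolynomial σ R) ∈ idealOfVarsOutside R T ↔ i ∉ T := by
  refine ⟨fun h hi => ?_, X_mem_idealOfVarsOutside⟩
  rw [← ker_killCompl_subtypeVal, RingHom.mem_ker, ← rename_X Subtype.val (⟨i, hi⟩ : T)] at h
  exact X_ne_zero _ ((killCompl_rename_app _ _).symm.trans h)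

theorem idealOfVarsOutside_insert_sup_span_X {T : Set σ} {i : σ} (hi : i ∉ T) :
    idealOfVarsOutside R (insert i T) ⊔ Ideal.span {X i} = idealOfVarsOutside R T := by
  have compl_eq : Tᶜ = insert i (insert i T)ᶜ := by
    ext j
    by_cases hj : j = i <;> simp [hj, hi]
  rw [idealOfVarsOutside, idealOfVarsOutside, compl_eq, Set.image_insert_eq, Ideal.span_insert,
    sup_comm]

theorem isWeaklyRegular_map_X_quotient_idealOfVarsOutside [IsDomain R] {l : List σ}
    (hl : l.Nodup) : IsWeaklyRegular (MvPolynomial σ R ⧸ idealOfVarsOutside R {i | i ∈ l})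
      (l.map (X : σ → MvPolynomial σ R)) := by
  induction l with
  | nil => exact IsWeaklyRegular.nil _ _
  | cons i l ih =>
    obtain ⟨hi, hl⟩ := List.nodup_cons.1 hl
    have setOf_mem_cons : {j | j ∈ i :: l} = insert i {j | j ∈ l} :=
      Set.ext fun j => List.mem_cons
    rw [setOf_mem_cons, List.map_cons, isWeaklyRegular_quotient_cons_iff,
      idealOfVarsOutside_insert_sup_span_X (show i ∉ {j | j ∈ l} from hi)]
    refine ⟨(isSMulRegular_quotient_iff_mem_of_smul_mem _ _).2 fun p hp => ?_, ih hl⟩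
    exact (Ideal.IsPrime.mem_or_mem inferInstance hp).resolve_left fun h =>
      X_mem_idealOfVarsOutside_iff.1 h (Set.mem_insert i _)

variable (K : Type) [Field K] {n : ℕ}

theorem maxGraded_eq_idealOfVarsOutside : maxGraded K n = idealOfVarsOutside K ∅ := by
  rw [maxGraded, idealOfVarsOutside, Set.compl_empty, Set.image_univ]

instance : (maxGraded K n).IsPrime :=
  maxGraded_eq_idealOfVarsOutside K (n := n) ▸ inferInstance

theorem idealOfVarsOutside_le_maxGraded (T : Set (Fin n)) :
    idealOfVarsOutside K T ≤ maxGraded K n :=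
  (idealOfVarsOutside_mono (Set.empty_subset T)).trans (maxGraded_eq_idealOfVarsOutside K).ge

theorem smul_top_quotient_idealOfVarsOutside_lt_top (T : Set (Fin n)) :
    maxGraded K n • (⊤ : Submodule (MvPolynomial (Fin n) K)
      (MvPolynomial (Fin n) K ⧸ idealOfVarsOutside K T)) < ⊤ := by
  refine smul_top_lt_top_of_annihilator_le Ideal.IsPrime.ne_top' ?_
  rw [Ideal.annihilator_quotient]
  exact idealOfVarsOutside_le_maxGraded K T

theorem subsingleton_ext_quotient_idealOfVarsOutside (T : Finset (Fin n)) {i : ℕ}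
    (hi : i < T.card) :
    Subsingleton (Ext
      (ModuleCat.of (MvPolynomial (Fin n) K) (MvPolynomial (Fin n) K ⧸ maxGraded K n))
      (ModuleCat.of (MvPolynomial (Fin n) K)
        (MvPolynomial (Fin n) K ⧸ idealOfVarsOutside K (T : Set (Fin n)))) i) := by
  let rs : List (MvPolynomial (Fin n) K) := T.toList.map X
  have rs_mem : ∀ r ∈ rs, r ∈ maxGraded K n := fun r hr => by
    obtain ⟨j, -, rfl⟩ := List.mem_map.1 hr
    exact Ideal.subset_span (Set.mem_range_self j)
  have rs_regular :
      IsWeaklyRegular (MvPolynomial (Fin n) K ⧸ idealOfVarsOutside K (T : Set (Fin n))) rs := by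
    have coe_eq : (T : Set (Fin n)) = {j | j ∈ T.toList} := Set.ext fun j => Finset.mem_toList.symm
    rw [coe_eq]
    exact isWeaklyRegular_map_X_quotient_idealOfVarsOutside T.nodup_toList
  refine subsingleton_ext_of_isWeaklyRegular
    (smul_top_quotient_idealOfVarsOutside_lt_top K _) rs_mem rs_regular ?_
  rwa [List.length_map, Finset.length_toList]

end CoordinateIdeals

section SquarefreeMonomialIdeals

open CategoryTheory Abelian

variable (K : Type) [Field K] {n : ℕ}

theorem sqMon_mem_idealOfVarsOutside_iff {A : Finset (Fin n)} {T : Set (Fin n)} :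
    sqMon K A ∈ idealOfVarsOutside K T ↔ ¬ (A : Set (Fin n)) ⊆ T := by
  simp only [sqMon, Ideal.IsPrime.prod_mem_iff, X_mem_idealOfVarsOutside_iff, Set.not_subset,
    Finset.mem_coe]

theorem span_sqMon_le_idealOfVarsOutside_iff {G : Set (Finset (Fin n))} {T : Set (Fin n)} :
    Ideal.span (sqMon K '' G) ≤ idealOfVarsOutside K T ↔ ∀ A ∈ G, ¬ (A : Set (Fin n)) ⊆ T := by
  rw [Ideal.span_le, Set.image_subset_iff]
  exact forall₂_congr fun A _ => sqMon_mem_idealOfVarsOutside_iff K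

theorem sqMon_mem_of_subset_s4 {J : Ideal (MvPolynomial (Fin n) K)} {A T : Finset (Fin n)}
    (hAT : A ⊆ T) (hA : sqMon K A ∈ J) : sqMon K T ∈ J :=
  J.mem_of_dvd (Finset.prod_dvd_prod_of_subset A T X hAT) hA

theorem sqMon_mem_span_sqMon_iff {G : Set (Finset (Fin n))} {T : Finset (Fin n)} :
    sqMon K T ∈ Ideal.span (sqMon K '' G) ↔ ∃ A ∈ G, A ⊆ T := by
  refine ⟨fun h => ?_, fun ⟨A, hA, hAT⟩ =>
    sqMon_mem_of_subset_s4 K hAT (Ideal.subset_span (Set.mem_image_of_mem _ hA))⟩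
  by_contra! not_subset
  have span_le : Ideal.span (sqMon K '' G) ≤ idealOfVarsOutside K (T : Set (Fin n)) :=
    (span_sqMon_le_idealOfVarsOutside_iff K).2 fun A hA hAT =>
      not_subset A hA (Finset.coe_subset.1 hAT)
  exact (sqMon_mem_idealOfVarsOutside_iff K).1 (span_le h) subset_rfl

theorem GenBySqMonOfDeg.exists_le_card {P : ℕ → Prop} {I : Ideal (MvPolynomial (Fin n) K)}
    (hI : GenBySqMonOfDeg K P I) {T : Finset (Fin n)} (hT : sqMon K T ∈ I) :
    ∃ k ≤ T.card, P k := by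
  obtain ⟨G, hG, rfl⟩ := hI
  obtain ⟨A, hA, hAT⟩ := (sqMon_mem_span_sqMon_iff K).1 hT
  exact ⟨A.card, Finset.card_le_card hAT, hG A hA⟩

theorem span_sqMon_colon_sqMon {G : Set (Finset (Fin n))} {T : Finset (Fin n)}
    (hT : sqMon K T ∉ Ideal.span (sqMon K '' G))
    (hinsert : ∀ j ∉ T, sqMon K (insert j T) ∈ Ideal.span (sqMon K '' G)) :
    (Ideal.span (sqMon K '' G)).colon {sqMon K T} = idealOfVarsOutside K (T : Set (Fin n)) := by
  refine le_antisymm (fun p hp => ?_) (Ideal.span_le.2 ?_)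
  · have span_le : Ideal.span (sqMon K '' G) ≤ idealOfVarsOutside K (T : Set (Fin n)) :=
      (span_sqMon_le_idealOfVarsOutside_iff K).2 fun A hA hAT =>
        hT ((sqMon_mem_span_sqMon_iff K).2 ⟨A, hA, Finset.coe_subset.1 hAT⟩)
    have mul_mem := span_le (Submodule.mem_colon_singleton.1 hp)
    exact (Ideal.IsPrime.mem_or_mem inferInstance mul_mem).resolve_right fun h =>
      (sqMon_mem_idealOfVarsOutside_iff K).1 h subset_rfl
  · rintro _ ⟨j, hj, rfl⟩
    refine Submodule.mem_colon_singleton.2 ?_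
    have := hinsert j hj
    rwa [sqMon, Finset.prod_insert hj] at this

theorem exists_sqMon_notMem_forall_insert_mem {G : Set (Finset (Fin n))}
    {J : Ideal (MvPolynomial (Fin n) K)} (h : ¬ Ideal.span (sqMon K '' G) ≤ J) :
    ∃ T, sqMon K T ∈ Ideal.span (sqMon K '' G) ∧ sqMon K T ∉ J ∧
      ∀ j ∉ T, sqMon K (insert j T) ∈ J := by
  have nonempty : {T | sqMon K T ∈ Ideal.span (sqMon K '' G) ∧ sqMon K T ∉ J}.Nonempty := by
    obtain ⟨_, ⟨A, hA, rfl⟩, hAJ⟩ := Set.not_subset.1 fun hsub => h (Ideal.span_le.2 hsub)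
    exact ⟨A, Ideal.subset_span (Set.mem_image_of_mem _ hA), hAJ⟩
  obtain ⟨T, ⟨hTG, hTJ⟩, hmax⟩ := Set.Finite.exists_maximal (Set.toFinite _) nonempty
  refine ⟨T, hTG, hTJ, fun j hj => ?_⟩
  by_contra hinsert
  have := hmax ⟨sqMon_mem_of_subset_s4 K (Finset.subset_insert j T) hTG, hinsert⟩
    (Finset.subset_insert j T)
  exact hj (this (Finset.mem_insert_self j T))

theorem subsingleton_ext_idealQuot {d i : ℕ} (hi : i < d) {G : Set (Finset (Fin n))}
    (hG : ∀ T ∈ G, d ≤ T.card) (H : Set (Finset (Fin n))) :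
    Subsingleton (Ext
      (ModuleCat.of (MvPolynomial (Fin n) K) (MvPolynomial (Fin n) K ⧸ maxGraded K n))
      (ModuleCat.of (MvPolynomial (Fin n) K)
        (idealQuot (Ideal.span (sqMon K '' G)) (Ideal.span (sqMon K '' H)))) i) := by
  induction H using WellFoundedGT.induction with
  | ind H ih =>
  by_cases hGH : Ideal.span (sqMon K '' G) ≤ Ideal.span (sqMon K '' H)
  · have : Subsingleton (idealQuot (Ideal.span (sqMon K '' G)) (Ideal.span (sqMon K '' H))) :=
      Submodule.Quotient.subsingleton_iff.2 (Submodule.comap_subtype_eq_top.2 hGH)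
    exact subsingleton_ext_of_isZero _ (ModuleCat.isZero_of_subsingleton _) i
  obtain ⟨T, hTG, hTH, hinsert⟩ := exists_sqMon_notMem_forall_insert_mem K hGH
  refine subsingleton_ext_quotient_of_colon_singleton _ ⟨sqMon K T, hTG⟩ i ?_ ?_
  · rw [comap_subtype_colon_singleton, span_sqMon_colon_sqMon K hTH hinsert]
    obtain ⟨A, hA, hAT⟩ := (sqMon_mem_span_sqMon_iff K).1 hTG
    exact subsingleton_ext_quotient_idealOfVarsOutside K T
      (hi.trans_le ((hG A hA).trans (Finset.card_le_card hAT)))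
  · have H_lt : H < insert T H := Set.ssubset_insert fun hT =>
      hTH (Ideal.subset_span (Set.mem_image_of_mem _ hT))
    have ih_insert := ih _ H_lt
    rw [Set.image_insert_eq, Ideal.span_insert, sup_comm] at ih_insert
    rwa [comap_subtype_sup_span_singleton]

theorem isAssociatedPrime_idealQuot {G : Set (Finset (Fin n))}
    {I : Ideal (MvPolynomial (Fin n) K)} {T : Finset (Fin n)} (hTI : sqMon K T ∈ I)
    (hT : sqMon K T ∉ Ideal.span (sqMon K '' G))
    (hinsert : ∀ j ∉ T, sqMon K (insert j T) ∈ Ideal.span (sqMon K '' G)) :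
    IsAssociatedPrime (idealOfVarsOutside K (T : Set (Fin n)))
      (idealQuot I (Ideal.span (sqMon K '' G))) := by
  refine isAssociatedPrime_iff.2 ⟨inferInstance, Submodule.mkQ _ ⟨sqMon K T, hTI⟩, ?_⟩
  rw [bot_colon_singleton_mkQ, comap_subtype_colon_singleton, span_sqMon_colon_sqMon K hT hinsert]

end SquarefreeMonomialIdeals

theorem stmt_4_general (K : Type) [Field K] {n d : ℕ} {I J : Ideal (MvPolynomial (Fin n) K)}
    {P : ℕ → Prop} (hI : GenBySqMonOfDeg K (d ≤ ·) I) (hJ : GenBySqMonOfDeg K P J)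
    {T : Finset (Fin n)} (hTd : T.card = d) (hTI : sqMon K T ∈ I) (hTJ : sqMon K T ∉ J)
    (hinsert : ∀ j ∉ T, sqMon K (insert j T) ∈ J) :
    moduleDepth (maxGraded K n) (idealQuot I J) = d := by
  obtain ⟨G, hG, rfl⟩ := hI
  obtain ⟨H, -, rfl⟩ := hJ
  have hass := isAssociatedPrime_idealQuot K hTI hTJ hinsert
  have hle := idealOfVarsOutside_le_maxGraded K (T : Set (Fin n))
  refine le_antisymm (moduleDepth_le_of_ringKrullDim_quotient_le hass hle ?_)
    (le_moduleDepth_of_subsingleton_ext ?_ fun i hi => subsingleton_ext_idealQuot K hi hG H)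
  · rw [ringKrullDim_quotient_idealOfVarsOutside, ringKrullDim_of_isNoetherianRing]
    simp [hTd]
  · exact smul_top_lt_top_of_annihilator_le Ideal.IsPrime.ne_top' <|
      Submodule.annihilator_top.ge.trans (hass.annihilator_le.trans hle)

/-- Lemma 1.6. -/
theorem stmt_4 (n : ℕ) (K : Type) [Field K] (d : ℕ) (hd : 0 < d)
    (I J : Ideal (MvPolynomial (Fin n) K)) (hJ0 : J ≠ ⊥) (hJI : J < I)
    (r : ℕ) (hr : 0 < r) (f : Fin r → Finset (Fin n)) (hfinj : Function.Injective f)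
    (hfd : ∀ i, (f i).card = d)
    (hIgen : I = Ideal.span (Set.range fun i => sqMon K (f i)))
    (hJgen : GenBySqMonOfDeg K (fun k => k = d + 1) J)
    (hex : ∃ i : Fin r, ∀ T : Finset (Fin n),
      T.card = d + 1 → f i ⊆ T → sqMon K T ∈ J) :
    moduleDepth (maxGraded K n) (idealQuot I J) = (d : ℕ∞) := by
  obtain ⟨i, hi⟩ := hex
  have hI : GenBySqMonOfDeg K (d ≤ ·) I :=
    ⟨Set.range f, Set.forall_mem_range.2 fun k => (hfd k).ge, by rw [hIgen, ← Set.range_comp]; rfl⟩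
  have hfI : sqMon K (f i) ∈ I := hIgen ▸ Ideal.subset_span (Set.mem_range_self i)
  have hfJ : sqMon K (f i) ∉ J := fun h => by
    obtain ⟨k, hk, rfl⟩ := hJgen.exists_le_card K h
    exact absurd (hfd i) (by omega)
  exact stmt_4_general K hI hJgen (hfd i) hfI hfJ fun j hj =>
    hi _ (by rw [Finset.card_insert_of_notMem hj, hfd]) (Finset.subset_insert j (f i))
end
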